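/- arXiv:1311.5626 — 5 statements merged into one kernel-verified Lean document; each statement's English description precedes it below -/
import Mathlib

section
/- Let d≥1 and let λ=(λ^{(0)},…,λ^{(d−1)}) be a d-partition of n. Set α:=∑_{i=0}^{d−1} λ^{(i)}_1. Then there exists a partition ν of n with ν_1 = α and iterated Littlewood–Richardson coefficient c^ν_λ > 0. -/
/-- A skew semistandard filling of the skew shape `ν/λ`: a function on cells, positive on the
cells of `ν/λ`, zero elsewhere, with entries weakly increasing along rows and strictly increasing
down columns (rows are indexed by the first coordinate, columns by the second, both 0-based). -/
def IsSkewSS (ν lam : YoungDiagram) (T : ℕ × ℕ → ℕ) : Prop :=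
  lam ≤ ν ∧
  (∀ c ∈ ν.cells \ lam.cells, 1 ≤ T c) ∧
  (∀ c, c ∉ ν.cells \ lam.cells → T c = 0) ∧
  (∀ i j₁ j₂, j₁ ≤ j₂ → (i, j₁) ∈ ν.cells \ lam.cells → (i, j₂) ∈ ν.cells \ lam.cells →
      T (i, j₁) ≤ T (i, j₂)) ∧
  (∀ i₁ i₂ j, i₁ < i₂ → (i₁, j) ∈ ν.cells \ lam.cells → (i₂, j) ∈ ν.cells \ lam.cells →
      T (i₁, j) < T (i₂, j))

/-- A skew semistandard tableau of shape `ν/λ` and weight `μ`: exactly `μ_l` entries equal `l`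
for every `l ≥ 1` (here `μ_l` is `μ.rowLen (l-1)`, rows of `μ` being 0-indexed). -/
def IsSkewSSYT (ν lam μ : YoungDiagram) (T : ℕ × ℕ → ℕ) : Prop :=
  IsSkewSS ν lam T ∧
  ∀ l, 1 ≤ l → ((ν.cells \ lam.cells).filter (fun c => T c = l)).card = μ.rowLen (l - 1)

/-- `rowCount ν lam T k l` is `T^l_k`: the number of entries equal to `l` in row `k`
(1-indexed) of the skew tableau `T` of shape `ν/λ`. -/
def rowCount (ν lam : YoungDiagram) (T : ℕ × ℕ → ℕ) (k l : ℕ) : ℕ :=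
  ((ν.cells \ lam.cells).filter (fun c => c.1 = k - 1 ∧ T c = l)).card

/-- A Littlewood–Richardson tableau of shape `ν/λ` and weight `μ`: a skew semistandard tableau
of shape `ν/λ` and weight `μ` admitting a companion semistandard tableau `T'` of straight shape
`μ`, i.e. `T^l_k = T'^k_l` for all `k, l ≥ 1`. -/
def IsLRTableau (ν lam μ : YoungDiagram) (T : ℕ × ℕ → ℕ) : Prop :=
  IsSkewSSYT ν lam μ T ∧
  ∃ T' : ℕ × ℕ → ℕ, IsSkewSS μ ⊥ T' ∧
    ∀ k l, 1 ≤ k → 1 ≤ l → rowCount ν lam T k l = rowCount μ ⊥ T' l k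

/-- The Littlewood–Richardson coefficient `c^ν_{λ,μ}`: the number of Littlewood–Richardson
tableaux of shape `ν/λ` and weight `μ`. -/
noncomputable def lrCoeff (ν lam μ : YoungDiagram) : ℕ :=
  Nat.card {T : ℕ × ℕ → ℕ // IsLRTableau ν lam μ T}

/-- A witness for the iterated Littlewood–Richardson coefficient `c^ν_λ` of a `d`-partition
`λ = (lam 0, …, lam (d-1))`: a sequence `seq` of partitions with `seq 0 = lam 0`,
`seq (d-1) = ν`, together with, for each `1 ≤ i ≤ d-1`, a Littlewood–Richardson tableau `T i`
of shape `seq i / seq (i-1)` and weight `lam i`.  (The remaining data are normalised to junk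
values so that witnesses are counted exactly once.) -/
def IsIterWitness (d : ℕ) (lam : ℕ → YoungDiagram) (ν : YoungDiagram)
    (seq : ℕ → YoungDiagram) (T : ℕ → ℕ × ℕ → ℕ) : Prop :=
  seq 0 = lam 0 ∧ seq (d - 1) = ν ∧
  (∀ i, 1 ≤ i → i ≤ d - 1 → IsLRTableau (seq i) (seq (i - 1)) (lam i) (T i)) ∧
  (∀ i, d ≤ i → seq i = ⊥) ∧
  (T 0 = fun _ => 0) ∧ (∀ i, d ≤ i → T i = fun _ => 0)

/-- The iterated Littlewood–Richardson coefficient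
`c^ν_λ = ∑ ∏_{i=1}^{d-1} c^{ν⁽ⁱ⁾}_{ν⁽ⁱ⁻¹⁾, λ⁽ⁱ⁾}` (with `ν⁽⁰⁾ = λ⁽⁰⁾`, `ν⁽ᵈ⁻¹⁾ = ν`),
counted as the number of chains of Littlewood–Richardson tableaux. -/
noncomputable def iterLR (d : ℕ) (lam : ℕ → YoungDiagram) (ν : YoungDiagram) : ℕ :=
  Nat.card {w : (ℕ → YoungDiagram) × (ℕ → ℕ × ℕ → ℕ) // IsIterWitness d lam ν w.1 w.2}

/-!
Take `ν` to be the rowwise sum `lam 0 + ⋯ + lam (d - 1)` and `ν⁽ⁱ⁾` the partial sums. Row `k` of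
`(κ + μ)/κ` has as many cells as row `k` of `μ`, so filling it with the entry `k` gives a
Littlewood–Richardson tableau of weight `μ`, whose companion is the same filling of `μ` itself.
Since `Nat.card` of an infinite type is `0`, positivity of `iterLR` also requires that there are
only finitely many witnesses.
-/

open Finset

section YoungDiagramRows

variable {ι : Type*} {μ ν : YoungDiagram}

theorem rowLen_pos_iff_lt_colLen {i : ℕ} : 0 < μ.rowLen i ↔ i < μ.colLen 0 :=
  YoungDiagram.mem_iff_lt_rowLen.symm.trans YoungDiagram.mem_iff_lt_colLen

theorem le_of_forall_rowLen_le (h : ∀ i, μ.rowLen i ≤ ν.rowLen i) : μ ≤ ν := fun _ hc =>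
  YoungDiagram.mem_iff_lt_rowLen.2 ((YoungDiagram.mem_iff_lt_rowLen.1 hc).trans_le (h _))

theorem card_eq_sum_rowLen {N : ℕ} (h : μ.colLen 0 ≤ N) : μ.card = ∑ i ∈ range N, μ.rowLen i := by
  simp only [YoungDiagram.rowLen_eq_card, YoungDiagram.row]
  refine card_eq_sum_card_fiberwise fun c hc => mem_coe.2 (mem_range.2 ?_)
  have hrow : 0 < μ.rowLen c.1 := (Nat.zero_le _).trans_lt (YoungDiagram.mem_iff_lt_rowLen.1 hc)
  exact (rowLen_pos_iff_lt_colLen.1 hrow).trans_le h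

theorem card_row_sdiff (h : μ ≤ ν) (i : ℕ) :
    #{c ∈ ν.cells \ μ.cells | c.1 = i} = ν.rowLen i - μ.rowLen i := by
  rw [YoungDiagram.rowLen_eq_card, YoungDiagram.rowLen_eq_card, YoungDiagram.row, YoungDiagram.row,
    ← card_sdiff_of_subset (filter_subset_filter _ h)]
  congr 1
  grind

theorem finite_Iic_youngDiagram (ν : YoungDiagram) : (Set.Iic ν).Finite :=
  Set.Finite.of_finite_image (f := YoungDiagram.cells)
    (ν.cells.powerset.finite_toSet.subset
      (Set.image_subset_iff.2 fun _ hμ => mem_coe.2 (mem_powerset.2 hμ)))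
    fun _ _ _ _ h => YoungDiagram.ext h

/-- The rowwise sum of a finite family of partitions: its `a`-th part is the sum of the `a`-th
parts of the members. The factors of the product only bound the cells; the filter decides. -/
def rowSum (s : Finset ι) (lam : ι → YoungDiagram) : YoungDiagram where
  cells := {c ∈ range (s.sup fun i => (lam i).colLen 0) ×ˢ range (∑ i ∈ s, (lam i).rowLen 0) |
    c.2 < ∑ i ∈ s, (lam i).rowLen c.1}
  isLowerSet := by
    rintro ⟨a, b⟩ ⟨a', b'⟩ hle h
    obtain ⟨ha, hb⟩ := Prod.mk_le_mk.1 hle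
    have hrow : ∑ i ∈ s, (lam i).rowLen a ≤ ∑ i ∈ s, (lam i).rowLen a' :=
      sum_le_sum fun i _ => (lam i).rowLen_anti a' a ha
    simp only [coe_filter, mem_product, mem_range, Set.mem_ofPred_eq] at h ⊢
    omega

variable (s : Finset ι) (lam : ι → YoungDiagram)

theorem mem_rowSum {a b : ℕ} : (a, b) ∈ rowSum s lam ↔ b < ∑ i ∈ s, (lam i).rowLen a := by
  rw [← YoungDiagram.mem_cells]
  simp only [rowSum, mem_filter, mem_product, mem_range, and_iff_right_iff_imp]
  intro hb
  obtain ⟨i, hi, hne⟩ := exists_ne_zero_of_sum_ne_zero (Nat.ne_zero_of_lt hb)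
  exact ⟨(rowLen_pos_iff_lt_colLen.1 (Nat.pos_of_ne_zero hne)).trans_le
      (le_sup (f := fun i => (lam i).colLen 0) hi),
    hb.trans_le (sum_le_sum fun i _ => (lam i).rowLen_anti 0 a (Nat.zero_le a))⟩

theorem rowLen_rowSum (a : ℕ) : (rowSum s lam).rowLen a = ∑ i ∈ s, (lam i).rowLen a :=
  eq_of_forall_lt_iff fun _ => by rw [← YoungDiagram.mem_iff_lt_rowLen, mem_rowSum]

theorem colLen_rowSum_le : (rowSum s lam).colLen 0 ≤ s.sup fun i => (lam i).colLen 0 := by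
  refine le_of_forall_lt fun a ha => ?_
  have hcell := YoungDiagram.mem_iff_lt_colLen.2 ha
  exact mem_range.1 (mem_product.1 (mem_filter.1 hcell).1).1

theorem card_rowSum : (rowSum s lam).card = ∑ i ∈ s, (lam i).card := by
  rw [card_eq_sum_rowLen (colLen_rowSum_le s lam)]
  simp only [rowLen_rowSum]
  rw [sum_comm]
  exact sum_congr rfl fun i hi =>
    (card_eq_sum_rowLen (le_sup (f := fun i => (lam i).colLen 0) hi)).symm

end YoungDiagramRows

section RowIndexFilling

variable {ν κ μ : YoungDiagram}

/-- The filling of a skew shape `ν/κ` in which every entry is its row index. Rows of diagrams are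
0-based and entries are positive, hence the shift by one. -/
def rowIndexFilling (ν κ : YoungDiagram) (c : ℕ × ℕ) : ℕ :=
  if c ∈ ν.cells \ κ.cells then c.1 + 1 else 0

theorem rowIndexFilling_of_mem {c : ℕ × ℕ} (hc : c ∈ ν.cells \ κ.cells) :
    rowIndexFilling ν κ c = c.1 + 1 :=
  if_pos hc

theorem rowIndexFilling_eq_zero_of_le (h : ν ≤ κ) : rowIndexFilling ν κ = fun _ => 0 :=
  funext fun _ => if_neg fun hc => (mem_sdiff.1 hc).2 (h (mem_sdiff.1 hc).1)

theorem isSkewSS_rowIndexFilling (h : κ ≤ ν) : IsSkewSS ν κ (rowIndexFilling ν κ) := by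
  refine ⟨h, fun c hc => ?_, fun c hc => if_neg hc, fun i j₁ j₂ _ h₁ h₂ => ?_,
    fun i₁ i₂ j hi h₁ h₂ => ?_⟩
  · rw [rowIndexFilling_of_mem hc]
    exact Nat.le_add_left 1 c.1
  · rw [rowIndexFilling_of_mem h₁, rowIndexFilling_of_mem h₂]
  · rw [rowIndexFilling_of_mem h₁, rowIndexFilling_of_mem h₂]
    exact Nat.succ_lt_succ hi

theorem card_rowIndexFilling_eq (h : κ ≤ ν) {l : ℕ} (hl : 1 ≤ l) :
    #{c ∈ ν.cells \ κ.cells | rowIndexFilling ν κ c = l} =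
      ν.rowLen (l - 1) - κ.rowLen (l - 1) := by
  rw [← card_row_sdiff h]
  congr 1
  refine filter_congr fun c hc => ?_
  rw [rowIndexFilling_of_mem hc]
  omega

theorem rowCount_rowIndexFilling (h : κ ≤ ν) {k l : ℕ} (hk : 1 ≤ k) :
    rowCount ν κ (rowIndexFilling ν κ) k l =
      if k = l then ν.rowLen (k - 1) - κ.rowLen (k - 1) else 0 := by
  unfold rowCount
  split_ifs with hkl
  · rw [← card_row_sdiff h]
    congr 1
    refine filter_congr fun c hc => ?_
    rw [rowIndexFilling_of_mem hc]
    omega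
  · refine card_eq_zero.2 (filter_eq_empty_iff.2 fun c hc => ?_)
    rw [rowIndexFilling_of_mem hc]
    omega

theorem isLRTableau_rowIndexFilling (h : ∀ i, ν.rowLen i = κ.rowLen i + μ.rowLen i) :
    IsLRTableau ν κ μ (rowIndexFilling ν κ) := by
  have hle : κ ≤ ν := le_of_forall_rowLen_le fun i => (h i).symm ▸ Nat.le_add_right _ _
  have hbot (i : ℕ) : (⊥ : YoungDiagram).rowLen i = 0 := by
    simp [YoungDiagram.rowLen_eq_card, YoungDiagram.row]
  refine ⟨⟨isSkewSS_rowIndexFilling hle, fun l hl => ?_⟩,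
    rowIndexFilling μ ⊥, isSkewSS_rowIndexFilling bot_le, fun k l hk hl => ?_⟩
  · rw [card_rowIndexFilling_eq hle hl, h, Nat.add_sub_cancel_left]
  · rw [rowCount_rowIndexFilling hle hk, rowCount_rowIndexFilling bot_le hl, h, hbot,
      Nat.add_sub_cancel_left, Nat.sub_zero]
    grind

end RowIndexFilling

section Finiteness

theorem finite_pi_inter_eqOn_compl {α β : Type*} {s : Set α} (hs : s.Finite) {t : α → Set β}
    (ht : ∀ a ∈ s, (t a).Finite) (g : α → β) : (s.pi t ∩ {f | sᶜ.EqOn f g}).Finite := by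
  have := hs.to_subtype
  refine Set.Finite.of_finite_image (f := s.domRestrict)
    ((Set.Finite.pi' (t := fun a : s => t a) fun a => ht a a.2).subset ?_) ?_
  · rintro _ ⟨f, hf, rfl⟩ a
    exact hf.1 a a.2
  · intro f hf f' hf' h
    funext a
    by_cases ha : a ∈ s
    · exact congrFun h ⟨a, ha⟩
    · rw [hf.2 ha, hf'.2 ha]

theorem IsSkewSSYT.le_colLen {ν κ μ : YoungDiagram} {T : ℕ × ℕ → ℕ} (h : IsSkewSSYT ν κ μ T)
    (c : ℕ × ℕ) : T c ≤ μ.colLen 0 := by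
  obtain ⟨⟨-, hpos, hzero, -, -⟩, hweight⟩ := h
  by_cases hc : c ∈ ν.cells \ κ.cells
  · have hrow : 0 < μ.rowLen (T c - 1) := by
      rw [← hweight (T c) (hpos c hc)]
      exact card_pos.2 ⟨c, mem_filter.2 ⟨hc, rfl⟩⟩
    exact Nat.le_of_pred_lt (rowLen_pos_iff_lt_colLen.1 hrow)
  · exact (hzero c hc).trans_le (Nat.zero_le _)

variable {d : ℕ} {lam : ℕ → YoungDiagram} {ν : YoungDiagram} {seq : ℕ → YoungDiagram}
  {T : ℕ → ℕ × ℕ → ℕ}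

theorem IsIterWitness.seq_le (h : IsIterWitness d lam ν seq T) {i : ℕ} (hi : i ≤ d - 1) :
    seq i ≤ ν := by
  obtain ⟨-, hlast, hLR, -, -, -⟩ := h
  rw [← hlast]
  induction hi using Nat.decreasingInduction with
  | self => exact le_rfl
  | of_succ k hk ih => exact (hLR (k + 1) (Nat.le_add_left 1 k) hk).1.1.1.trans ih

theorem IsIterWitness.entry_le (h : IsIterWitness d lam ν seq T) {i : ℕ} (hi : i ≤ d - 1)
    (c : ℕ × ℕ) : T i c ≤ (lam i).colLen 0 := by
  obtain ⟨-, -, hLR, -, hT₀, -⟩ := h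
  rcases Nat.eq_zero_or_pos i with rfl | hpos
  · exact (congrFun hT₀ c).trans_le (Nat.zero_le _)
  · exact (hLR i hpos hi).1.le_colLen c

theorem IsIterWitness.entry_eq_zero (h : IsIterWitness d lam ν seq T) {i : ℕ} (hi : i ≤ d - 1)
    {c : ℕ × ℕ} (hc : c ∉ ν) : T i c = 0 := by
  have hshape := h.seq_le hi
  obtain ⟨-, -, hLR, -, hT₀, -⟩ := h
  rcases Nat.eq_zero_or_pos i with rfl | hpos
  · exact congrFun hT₀ c
  · exact (hLR i hpos hi).1.1.2.2.1 c fun hc' => hc (hshape (mem_sdiff.1 hc').1)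

theorem finite_setOf_isIterWitness (d : ℕ) (lam : ℕ → YoungDiagram) (ν : YoungDiagram) :
    {w : (ℕ → YoungDiagram) × (ℕ → ℕ × ℕ → ℕ) | IsIterWitness d lam ν w.1 w.2}.Finite := by
  have hshapes := finite_pi_inter_eqOn_compl (Set.finite_Iio d)
    (fun _ _ => finite_Iic_youngDiagram ν) (fun _ => ⊥)
  have hfillings (i : ℕ) := finite_pi_inter_eqOn_compl ν.cells.finite_toSet
    (fun _ _ => Set.finite_Iic ((lam i).colLen 0)) (fun _ => 0)
  have htableaux := finite_pi_inter_eqOn_compl (Set.finite_Iio d)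
    (fun i _ => hfillings i) (fun _ _ => 0)
  refine (hshapes.prod htableaux).subset ?_
  rintro ⟨seq, T⟩ h
  have hseq_junk := h.2.2.2.1
  have hT_junk := h.2.2.2.2.2
  exact ⟨⟨fun i hi => h.seq_le (Nat.le_sub_one_of_lt hi), fun i hi => hseq_junk i (not_lt.1 hi)⟩,
    ⟨fun i hi => ⟨fun c _ => h.entry_le (Nat.le_sub_one_of_lt hi) c,
      fun c hc => h.entry_eq_zero (Nat.le_sub_one_of_lt hi) hc⟩,
    fun i hi => hT_junk i (not_lt.1 hi)⟩⟩

theorem IsIterWitness.iterLR_pos (h : IsIterWitness d lam ν seq T) : 0 < iterLR d lam ν :=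
  Nat.card_pos_iff.2 ⟨⟨⟨(seq, T), h⟩⟩, (finite_setOf_isIterWitness d lam ν).to_subtype⟩

end Finiteness

section PartialSums

/-- The shapes `ν⁽ⁱ⁾ = lam 0 + ⋯ + lam i` for `i < d`, continued by `⊥` as `IsIterWitness` asks. -/
def partialRowSum (d : ℕ) (lam : ℕ → YoungDiagram) (i : ℕ) : YoungDiagram :=
  if i < d then rowSum (range (i + 1)) lam else ⊥

theorem rowLen_partialRowSum {d i : ℕ} (hi : i < d) (lam : ℕ → YoungDiagram) (a : ℕ) :
    (partialRowSum d lam i).rowLen a = ∑ j ∈ range (i + 1), (lam j).rowLen a := by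
  rw [partialRowSum, if_pos hi, rowLen_rowSum]

theorem isIterWitness_partialRowSum {d : ℕ} (hd : 1 ≤ d) (lam : ℕ → YoungDiagram) :
    IsIterWitness d lam (rowSum (range d) lam) (partialRowSum d lam)
      (fun i => rowIndexFilling (partialRowSum d lam i) (partialRowSum d lam (i - 1))) := by
  have hjunk (i : ℕ) (hi : d ≤ i) : partialRowSum d lam i = ⊥ := if_neg hi.not_gt
  refine ⟨?_, ?_, fun i h₁ h₂ => isLRTableau_rowIndexFilling fun a => ?_, hjunk,
    rowIndexFilling_eq_zero_of_le le_rfl, fun i hi => rowIndexFilling_eq_zero_of_le ?_⟩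
  · have hrow (a : ℕ) : (partialRowSum d lam 0).rowLen a = (lam 0).rowLen a := by
      rw [rowLen_partialRowSum hd, sum_range_one]
    exact le_antisymm (le_of_forall_rowLen_le fun a => (hrow a).le)
      (le_of_forall_rowLen_le fun a => (hrow a).ge)
  · rw [partialRowSum, if_pos (Nat.sub_one_lt_of_lt hd), Nat.sub_add_cancel hd]
  · have hi : i < d := Nat.lt_of_le_sub_one hd h₂
    rw [rowLen_partialRowSum hi, rowLen_partialRowSum ((Nat.sub_le i 1).trans_lt hi),
      Nat.sub_add_cancel h₁, sum_range_succ]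
  · exact (hjunk i hi).trans_le bot_le

end PartialSums

theorem stmt5 (d n : ℕ) (hd : 1 ≤ d) (lam : ℕ → YoungDiagram)
    (hsum : ∑ i ∈ Finset.range d, (lam i).card = n) :
    ∃ ν : YoungDiagram, ν.card = n ∧
      ν.rowLen 0 = ∑ i ∈ Finset.range d, (lam i).rowLen 0 ∧
      0 < iterLR d lam ν := by
  refine ⟨rowSum (range d) lam, (card_rowSum _ lam).trans hsum, rowLen_rowSum _ lam 0, ?_⟩
  exact (isIterWitness_partialRowSum hd lam).iterLR_pos
end

section
/- For every n≥1 and every 0≤m≤n−2, the counting function Z satisfies the recursion Z_n(m) = ∑_{j=n−m−1}^{n−1} Z_j(m−n+j+1) · Z_{n−j}(n−j−1). -/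
/-- The set 𝔗ₙ, encoded as lists of pairs `(i_j, k_j)`:
entries satisfy `1 ≤ i_j - k_j` (i.e. `k_j < i_j`) and `i_j ≤ n-1` (i.e. `i_j + 1 ≤ n`),
the `i_j` are strictly increasing, and the `i_j - k_j` are strictly increasing. -/
def IsTT (n : ℕ) (l : List (ℕ × ℕ)) : Prop :=
  (∀ p ∈ l, p.2 < p.1 ∧ p.1 + 1 ≤ n) ∧
  List.Chain' (· < ·) (l.map Prod.fst) ∧
  List.Chain' (· < ·) (l.map (fun p => p.1 - p.2))

/-- The set of integers covered by the intervals `[i_j - k_j, i_j]`. -/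
def cov (l : List (ℕ × ℕ)) : Finset ℕ :=
  l.foldr (fun p s => Finset.Icc (p.1 - p.2) p.1 ∪ s) ∅

/-- The weight of an element of 𝔗ₙ. -/
def wt (l : List (ℕ × ℕ)) : ℕ := (cov l).card

/-- `Z n m` is the number of elements of 𝔗ₙ of weight `m`. -/
noncomputable def Z (n m : ℕ) : ℕ :=
  Nat.card {l : List (ℕ × ℕ) // IsTT n l ∧ wt l = m}

/-!
Position `0` is never covered, so every element of `𝔗ₙ` with `n ≥ 1` has a largest uncovered
position `j` in `{0, …, n - 1}`. No interval contains `j`, so the element is cut at `j` into an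
element of `𝔗_j` and a translate of an element of `𝔗_{n-j}`, and maximality of `j` says that the
latter covers all of `{1, …, n-j-1}`. Conversely, such a pair glues to an element of `𝔗ₙ` whose
last uncovered position is `j`, and weights add up.
-/

section ListLemmas

variable {α : Type*} {r : α → α → Prop} {l : List α}

theorem filter_append_filter_not_of_pairwise {p : α → Bool}
    (h : l.Pairwise fun x y => p y → p x) : l.filter p ++ l.filter (!p ·) = l := by
  induction l with
  | nil => rfl
  | cons x l ih =>
    obtain ⟨hx, hl⟩ := List.pairwise_cons.1 h
    by_cases hpx : p x
    · simpa [hpx] using ih hl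
    · have hnone : l.filter p = [] := List.filter_eq_nil_iff.2 fun y hy hpy => hpx (hx y hy hpy)
      have hall : l.filter (!p ·) = l := by simpa only [hnone, List.nil_append] using ih hl
      simp [hpx, hnone, hall]

theorem finite_setOf_pairwise_of_finite [Std.Irrefl r] [Std.Antisymm r] {s : Set α}
    (hs : s.Finite) : {l : List α | l.Pairwise r ∧ ∀ x ∈ l, x ∈ s}.Finite := by
  refine Set.Finite.of_finite_image (f := fun l => {x | x ∈ l}) (hs.finite_subsets.subset ?_) ?_
  · rintro _ ⟨l, hl, rfl⟩
    exact hl.2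
  · exact fun l hl l' hl' h => hl.1.eq_of_mem_iff hl'.1 fun x => Set.ext_iff.1 h x

end ListLemmas

section Membership

variable {n : ℕ} {l : List (ℕ × ℕ)}

theorem isTT_iff_pairwise :
    IsTT n l ↔ (∀ p ∈ l, p.2 < p.1 ∧ p.1 < n) ∧
      l.Pairwise fun p q => p.1 < q.1 ∧ p.1 - p.2 < q.1 - q.2 := by
  rw [List.pairwise_and_iff, ← List.pairwise_map (R := (· < ·)) (f := Prod.fst),
    ← List.pairwise_map (R := (· < ·)) (f := fun p : ℕ × ℕ => p.1 - p.2),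
    ← List.isChain_iff_pairwise, ← List.isChain_iff_pairwise]
  rfl

theorem IsTT.pairwise_fst_lt (h : IsTT n l) : l.Pairwise fun p q => p.1 < q.1 :=
  (isTT_iff_pairwise.1 h).2.imp And.left

theorem finite_setOf_isTT (n : ℕ) : {l | IsTT n l}.Finite := by
  let r : ℕ × ℕ → ℕ × ℕ → Prop := fun p q => p.1 < q.1
  have : Std.Irrefl r := ⟨fun p => lt_irrefl p.1⟩
  have : Std.Antisymm r := ⟨fun p q hpq hqp => (lt_asymm hpq hqp).elim⟩
  have hbox : (Set.Iio n ×ˢ Set.Iio n).Finite := (Set.finite_Iio n).prod (Set.finite_Iio n)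
  refine (finite_setOf_pairwise_of_finite (r := r) hbox).subset fun l hl => ?_
  refine ⟨hl.pairwise_fst_lt, fun p hp => ?_⟩
  obtain ⟨hlt, hle⟩ := hl.1 p hp
  exact ⟨hle, hlt.trans hle⟩

theorem mem_cov {x : ℕ} : x ∈ cov l ↔ ∃ p ∈ l, p.1 - p.2 ≤ x ∧ x ≤ p.1 := by
  induction l with
  | nil => simp [cov]
  | cons p l ih =>
    have hcons : cov (p :: l) = Finset.Icc (p.1 - p.2) p.1 ∪ cov l := rfl
    simp [hcons, ih]

theorem IsTT.cov_subset_Ioo (h : IsTT n l) : cov l ⊆ Finset.Ioo 0 n := by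
  intro x hx
  obtain ⟨p, hp, hlow, hhigh⟩ := mem_cov.1 hx
  have := h.1 p hp
  exact Finset.mem_Ioo.2 (by omega)

theorem IsTT.notMem_cov_of_le {x : ℕ} (h : IsTT n l) (hx : n ≤ x) : x ∉ cov l := fun hcov =>
  hx.not_gt (Finset.mem_Ioo.1 (h.cov_subset_Ioo hcov)).2

end Membership

section Gaps

variable {n k : ℕ} {l : List (ℕ × ℕ)}

/-- The positions in `{0, …, n - 1}` that no interval of `l` covers. Position `0` is included on
purpose: it is a gap of every element of `𝔗ₙ` with `n ≥ 1`, which guarantees a last gap. -/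
def gaps (n : ℕ) (l : List (ℕ × ℕ)) : Finset ℕ := Finset.range n \ cov l

theorem mem_gaps {x : ℕ} : x ∈ gaps n l ↔ x < n ∧ x ∉ cov l := by
  rw [gaps, Finset.mem_sdiff, Finset.mem_range]

theorem IsTT.zero_mem_gaps (h : IsTT (k + 1) l) : 0 ∈ gaps (k + 1) l :=
  mem_gaps.2 ⟨k.succ_pos, fun h0 => (Finset.mem_Ioo.1 (h.cov_subset_Ioo h0)).1.false⟩

theorem IsTT.card_gaps_add_wt (h : IsTT n l) : (gaps n l).card + wt l = n := by
  have hsub : cov l ⊆ Finset.range n := fun x hx =>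
    Finset.mem_range.2 (Finset.mem_Ioo.1 (h.cov_subset_Ioo hx)).2
  rw [gaps, wt, Finset.card_sdiff_add_card_eq_card hsub, Finset.card_range]

theorem IsTT.gaps_eq_singleton_zero_iff (h : IsTT (k + 1) l) :
    gaps (k + 1) l = {0} ↔ wt l = k := by
  have hcard := h.card_gaps_add_wt
  constructor
  · intro heq
    rw [heq, Finset.card_singleton] at hcard
    omega
  · intro hwt
    exact (Finset.eq_of_subset_of_card_le (Finset.singleton_subset_iff.2 h.zero_mem_gaps)
      (by rw [Finset.card_singleton]; omega)).symm

end Gaps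

section Glue

variable {j k : ℕ} {a a' b b' l : List (ℕ × ℕ)}

/-- The translate of `l` by `j`: every interval `[i - k, i]` becomes `[i + j - k, i + j]`. -/
def shift (j : ℕ) (l : List (ℕ × ℕ)) : List (ℕ × ℕ) := l.map fun p => (p.1 + j, p.2)

/-- Concatenation of `a` with the translate of `b` by `j`; for `a ∈ 𝔗_j` and `b ∈ 𝔗_k` it is the
element of `𝔗_{j+k}` whose part left of `j` is `a` and whose part right of `j` is `b`. -/
def glue (j : ℕ) (a b : List (ℕ × ℕ)) : List (ℕ × ℕ) := a ++ shift j b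

theorem shift_injective (j : ℕ) : Function.Injective (shift j) := by
  refine List.map_injective_iff.2 fun p q hpq => ?_
  simpa only [Prod.mk.injEq, Nat.add_right_cancel_iff, ← Prod.ext_iff] using hpq

theorem isTT_glue (ha : IsTT j a) (hb : IsTT k b) : IsTT (j + k) (glue j a b) := by
  rw [isTT_iff_pairwise] at *
  obtain ⟨ha, hapair⟩ := ha
  obtain ⟨hb, hbpair⟩ := hb
  simp only [glue, shift, List.forall_mem_append, List.forall_mem_map, List.pairwise_append,
    List.pairwise_map]
  refine ⟨⟨fun p hp => ?_, fun q hq => ?_⟩, hapair, hbpair.imp_of_mem fun hp hq hpq => ?_,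
    fun p hp q hq => ?_⟩
  · have := ha p hp
    omega
  · have := hb q hq
    omega
  · have := hb _ hp
    have := hb _ hq
    omega
  · have := ha p hp
    have := hb q hq
    omega

theorem cov_append (a b : List (ℕ × ℕ)) : cov (a ++ b) = cov a ∪ cov b := by
  ext x
  simp only [mem_cov, Finset.mem_union, List.mem_append, or_and_right, exists_or]

theorem cov_shift (j : ℕ) (hl : ∀ p ∈ l, p.2 ≤ p.1) :
    cov (shift j l) = (cov l).map (addRightEmbedding j) := by
  ext x
  simp only [shift, mem_cov, Finset.mem_map, List.mem_map, addRightEmbedding_apply]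
  constructor
  · rintro ⟨_, ⟨p, hp, rfl⟩, hlow, hhigh⟩
    have := hl p hp
    exact ⟨x - j, ⟨p, hp, by omega, by omega⟩, by omega⟩
  · rintro ⟨y, ⟨p, hp, hlow, hhigh⟩, rfl⟩
    exact ⟨_, ⟨p, hp, rfl⟩, by omega, by omega⟩

theorem cov_glue (j : ℕ) (a : List (ℕ × ℕ)) (hb : IsTT k b) :
    cov (glue j a b) = cov a ∪ (cov b).map (addRightEmbedding j) := by
  rw [glue, cov_append, cov_shift j fun p hp => (hb.1 p hp).1.le]

theorem wt_glue (ha : IsTT j a) (hb : IsTT k b) : wt (glue j a b) = wt a + wt b := by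
  have hdisj : Disjoint (cov a) ((cov b).map (addRightEmbedding j)) := by
    rw [Finset.disjoint_left]
    intro x hxa hxb
    obtain ⟨y, -, rfl⟩ := Finset.mem_map.1 hxb
    exact ha.notMem_cov_of_le (Nat.le_add_left j y) hxa
  rw [wt, cov_glue j a hb, Finset.card_union_of_disjoint hdisj, Finset.card_map, wt, wt]

theorem gaps_glue (ha : IsTT j a) (hb : IsTT k b) :
    gaps (j + k) (glue j a b) = gaps j a ∪ (gaps k b).map (addRightEmbedding j) := by
  ext x
  obtain hxj | ⟨y, rfl⟩ := (lt_or_ge x j).imp_right Nat.exists_eq_add_of_le'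
  · have hright (s : Finset ℕ) : x ∉ s.map (addRightEmbedding j) := fun hx => by
      obtain ⟨y, -, rfl⟩ := Finset.mem_map.1 hx
      exact (Nat.le_add_left j y).not_gt hxj
    simp only [mem_gaps, cov_glue j a hb, Finset.mem_union, hright, or_false, hxj,
      Nat.lt_add_right k hxj]
  · have hleft : y + j ∉ cov a := ha.notMem_cov_of_le (Nat.le_add_left j y)
    simp [mem_gaps, cov_glue j a hb, hleft, Nat.add_comm j k]

theorem isGreatest_gaps_glue_iff (ha : IsTT j a) (hb : IsTT (k + 1) b) :
    IsGreatest (gaps (j + (k + 1)) (glue j a b) : Set ℕ) j ↔ wt b = k := by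
  have hleft : ∀ x ∈ gaps j a, x ≤ j := fun x hx => (mem_gaps.1 hx).1.le
  have hj : j ∈ gaps (j + (k + 1)) (glue j a b) := by
    rw [gaps_glue ha hb]
    exact Finset.mem_union_right _ (Finset.mem_map.2 ⟨0, hb.zero_mem_gaps, j.zero_add⟩)
  calc IsGreatest (gaps (j + (k + 1)) (glue j a b) : Set ℕ) j
    _ ↔ ∀ x ∈ gaps (j + (k + 1)) (glue j a b), x ≤ j := and_iff_right hj
    _ ↔ ∀ y ∈ gaps (k + 1) b, y = 0 := by
      simpa [gaps_glue ha hb, or_imp, forall_and] using fun _ => hleft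
    _ ↔ gaps (k + 1) b = {0} := by
      rw [Finset.eq_singleton_iff_unique_mem, and_iff_right hb.zero_mem_gaps]
    _ ↔ wt b = k := hb.gaps_eq_singleton_zero_iff

theorem filter_fst_lt_glue (ha : IsTT j a) (b : List (ℕ × ℕ)) :
    (glue j a b).filter (fun p => p.1 < j) = a := by
  have hleft : a.filter (fun p => p.1 < j) = a :=
    List.filter_eq_self.2 fun p hp => decide_eq_true (ha.1 p hp).2
  have hright : (shift j b).filter (fun p => p.1 < j) = [] := by
    refine List.filter_eq_nil_iff.2 fun p hp => ?_
    obtain ⟨q, -, rfl⟩ := List.mem_map.1 hp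
    simp
  rw [glue, List.filter_append, hleft, hright, List.append_nil]

theorem glue_inj (ha : IsTT j a) (ha' : IsTT j a') :
    glue j a b = glue j a' b' ↔ a = a' ∧ b = b' := by
  refine ⟨fun h => ?_, fun ⟨haa, hbb⟩ => haa ▸ hbb ▸ rfl⟩
  obtain rfl : a = a' := by rw [← filter_fst_lt_glue ha b, h, filter_fst_lt_glue ha' b']
  exact ⟨rfl, shift_injective j (List.append_cancel_left h)⟩

theorem exists_eq_glue_of_pairwise (j : ℕ) (h : l.Pairwise fun p q => p.1 < q.1) :
    ∃ a b, (∀ p ∈ a, p.1 < j) ∧ l = glue j a b := by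
  have hright : l.filter (fun p => !decide (p.1 < j)) ∈ Set.range (shift j) := by
    refine (Set.range_list_map _).symm ▸ fun p hp => ?_
    have hjp : j ≤ p.1 := by simpa using (List.mem_filter.1 hp).2
    exact ⟨(p.1 - j, p.2), Prod.ext (Nat.sub_add_cancel hjp) rfl⟩
  obtain ⟨b, hb⟩ := hright
  refine ⟨l.filter fun p => p.1 < j, b, fun p hp => of_decide_eq_true (List.mem_filter.1 hp).2, ?_⟩
  rw [glue, hb, filter_append_filter_not_of_pairwise]
  exact h.imp fun hpq hq => decide_eq_true (hpq.trans (of_decide_eq_true hq))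

theorem IsTT.of_glue (h : IsTT (j + k) (glue j a b)) (hj : j ∉ cov (glue j a b))
    (ha : ∀ p ∈ a, p.1 < j) : IsTT j a ∧ IsTT k b := by
  have hjb : ∀ q ∈ b, ¬(q.1 + j - q.2 ≤ j ∧ j ≤ q.1 + j) := fun q hq hcov =>
    hj (mem_cov.2 ⟨_, List.mem_append_right _ (List.mem_map_of_mem hq), hcov⟩)
  simp only [isTT_iff_pairwise, glue, shift, List.forall_mem_append, List.forall_mem_map,
    List.pairwise_append, List.pairwise_map] at h ⊢
  obtain ⟨⟨hamem, hbmem⟩, hapair, hbpair, -⟩ := h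
  refine ⟨⟨fun p hp => ⟨(hamem p hp).1, ha p hp⟩, hapair⟩, fun q hq => ?_,
    hbpair.imp_of_mem fun hp hq hpq => ?_⟩
  · have := hbmem q hq
    have := hjb q hq
    omega
  · have := hjb _ hp
    have := hjb _ hq
    omega

theorem IsTT.exists_eq_glue (h : IsTT (j + k) l) (hj : j ∉ cov l) :
    ∃ a b, IsTT j a ∧ IsTT k b ∧ l = glue j a b := by
  obtain ⟨a, b, hlt, rfl⟩ := exists_eq_glue_of_pairwise j h.pairwise_fst_lt
  obtain ⟨ha, hb⟩ := h.of_glue hj hlt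
  exact ⟨a, b, ha, hb, rfl⟩

end Glue

section Recursion

open Finset.HasAntidiagonal (antidiagonal mem_antidiagonal)

/-- The elements of `𝔗ₙ` of weight `m`, so that `Z n m` counts this set. -/
def weightSet (n m : ℕ) : Set (List (ℕ × ℕ)) := {l | IsTT n l ∧ wt l = m}

theorem ncard_weightSet (n m : ℕ) : (weightSet n m).ncard = Z n m := rfl

theorem finite_weightSet (n m : ℕ) : (weightSet n m).Finite :=
  (finite_setOf_isTT n).subset fun _ hl => hl.1

theorem ncard_image2_glue_weightSet (j u k v : ℕ) :
    (Set.image2 (glue j) (weightSet j u) (weightSet k v)).ncard = Z j u * Z k v := by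
  rw [← Set.image_uncurry_prod, Set.InjOn.ncard_image, Set.ncard_prod, ncard_weightSet,
    ncard_weightSet]
  rintro ⟨a, b⟩ ⟨ha, -⟩ ⟨a', b'⟩ ⟨ha', -⟩ h
  exact Prod.ext_iff.2 ((glue_inj ha.1 ha'.1).1 h)

theorem isGreatest_gaps_of_mem_image2_glue {j u k : ℕ} {l : List (ℕ × ℕ)}
    (hl : l ∈ Set.image2 (glue j) (weightSet j u) (weightSet (k + 1) k)) :
    IsGreatest (gaps (j + (k + 1)) l : Set ℕ) j := by
  obtain ⟨a, ha, b, hb, rfl⟩ := hl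
  exact (isGreatest_gaps_glue_iff ha.1 hb.1).2 hb.2

-- A member of the left side has `d + 1` gaps; cutting at the last leaves `d` in the left part,
-- which therefore lies in `𝔗_{d+u}` when it has weight `u`.
theorem weightSet_eq_biUnion_antidiagonal (d m : ℕ) :
    weightSet (d + m + 1) m = ⋃ p ∈ (antidiagonal m : Set (ℕ × ℕ)),
      Set.image2 (glue (d + p.1)) (weightSet (d + p.1) p.1) (weightSet (p.2 + 1) p.2) := by
  ext l
  simp only [Set.mem_iUnion₂, Finset.mem_coe, mem_antidiagonal]
  constructor
  · rintro ⟨hl, hwt⟩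
    obtain ⟨j, hj⟩ : ∃ j, IsGreatest (gaps (d + m + 1) l : Set ℕ) j :=
      ⟨_, Finset.isGreatest_max' _ ⟨0, hl.zero_mem_gaps⟩⟩
    obtain ⟨hjn, hjcov⟩ := mem_gaps.1 hj.1
    obtain ⟨k, hk⟩ := Nat.exists_eq_add_of_lt hjn
    rw [hk, Nat.add_assoc] at hl hj
    obtain ⟨a, b, ha, hb, rfl⟩ := hl.exists_eq_glue hjcov
    have hwb : wt b = k := (isGreatest_gaps_glue_iff ha hb).1 hj
    rw [wt_glue ha hb, hwb] at hwt
    obtain rfl : j = d + wt a := by omega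
    exact ⟨(wt a, k), hwt, a, ⟨ha, rfl⟩, b, ⟨hb, hwb⟩, rfl⟩
  · rintro ⟨⟨u, k⟩, rfl, a, ⟨ha, hwa⟩, b, ⟨hb, hwb⟩, rfl⟩
    have hn : d + (u + k) + 1 = d + u + (k + 1) := by omega
    exact ⟨hn ▸ isTT_glue ha hb, by rw [wt_glue ha hb, hwa, hwb]⟩

theorem pairwiseDisjoint_image2_glue (d m : ℕ) :
    (antidiagonal m : Set (ℕ × ℕ)).PairwiseDisjoint fun p =>
      Set.image2 (glue (d + p.1)) (weightSet (d + p.1) p.1) (weightSet (p.2 + 1) p.2) := by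
  rintro ⟨u, k⟩ hp ⟨u', k'⟩ hp' hne
  rw [Finset.mem_coe, mem_antidiagonal] at hp hp'
  refine Set.disjoint_left.2 fun l hl hl' => hne ?_
  have hj := isGreatest_gaps_of_mem_image2_glue hl
  have hj' := isGreatest_gaps_of_mem_image2_glue hl'
  have hn : d + u + (k + 1) = d + u' + (k' + 1) := by omega
  have := (hn ▸ hj).unique hj'
  exact Prod.ext (by omega) (by omega)

theorem Z_add_add_one_eq_sum_antidiagonal (d m : ℕ) :
    Z (d + m + 1) m = ∑ p ∈ antidiagonal m, Z (d + p.1) p.1 * Z (p.2 + 1) p.2 := by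
  rw [← ncard_weightSet, weightSet_eq_biUnion_antidiagonal,
    Set.Finite.ncard_biUnion (Finset.finite_toSet _) _ (pairwiseDisjoint_image2_glue d m),
    finsum_mem_coe_finset]
  · simp only [ncard_image2_glue_weightSet]
  · exact fun p _ => (finite_weightSet _ _).image2 _ (finite_weightSet _ _)

end Recursion

theorem stmt6 (n m : ℕ) (hn : 1 ≤ n) (hm : m + 2 ≤ n) :
    Z n m = ∑ j ∈ Finset.Icc (n - m - 1) (n - 1),
      Z j (m + j + 1 - n) * Z (n - j) (n - j - 1) := by
  obtain ⟨d, rfl⟩ : ∃ d, n = d + m + 1 := ⟨n - m - 1, by omega⟩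
  have hIcc : Finset.Icc (d + m + 1 - m - 1) (d + m + 1 - 1) = Finset.Ico d (d + (m + 1)) := by
    ext j
    simp only [Finset.mem_Icc, Finset.mem_Ico]
    omega
  rw [Z_add_add_one_eq_sum_antidiagonal, Finset.Nat.sum_antidiagonal_eq_sum_range_succ_mk, hIcc,
    Finset.sum_Ico_eq_sum_range, Nat.add_sub_cancel_left]
  refine Finset.sum_congr rfl fun u hu => ?_
  have hum : u ≤ m := Finset.mem_range_succ_iff.1 hu
  congr 2 <;> omega
end

section
/- Let d,n≥1. Then the quotient A_{d,n}/R'(1) is a finite-dimensional ℂ-algebra of dimension dim_ℂ(A_{d,n}/R'(1)) = (2^{n−1}−1)d² − (2^{n−1}−2)d. -/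
/-- The group algebra `A_{d,n} = ℂ[(ℤ/dℤ)ⁿ]`. -/
abbrev Adn (d n : ℕ) : Type :=
  MonoidAlgebra ℂ (Multiplicative (Fin n → ZMod d))

/-- The monomial `x₁^{r 1} ⋯ xₙ^{r n}` in `A_{d,n}`, where the `j`-th coordinate (0-based
`j : Fin n`) corresponds to the generator `x_{j+1}`. -/
noncomputable def mono (d n : ℕ) (r : ℕ → ℕ) : Adn d n :=
  MonoidAlgebra.of ℂ (Multiplicative (Fin n → ZMod d))
    (Multiplicative.ofAdd fun j : Fin n => ((r ((j : ℕ) + 1) : ℤ) : ZMod d))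

/-- The generator `x_s` of `A_{d,n}` (for `1 ≤ s ≤ n`). -/
noncomputable def xgen (d n : ℕ) (s : ℕ) : Adn d n :=
  mono d n fun t => if t = s then 1 else 0

/-- The ideal `R'(1)` of `A_{d,n}`, generated by the elements
`(x_i - x_j)(x_i - x_k)(x_j - x_k)` for `1 ≤ i < j < k ≤ n`. -/
noncomputable def Rone (d n : ℕ) : Ideal (Adn d n) :=
  Ideal.span {p | ∃ i j k : ℕ, 1 ≤ i ∧ i < j ∧ j < k ∧ k ≤ n ∧
    p = (xgen d n i - xgen d n j) * (xgen d n i - xgen d n k) * (xgen d n j - xgen d n k)}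

/-!
Evaluating the `x_j` at `d`-th roots of unity identifies the group algebra of `(ℤ/dℤ)ⁿ` with the
algebra of all functions on the `dⁿ` points of `(ℤ/dℤ)ⁿ`: distinct characters are linearly
independent, and there are as many of them as the dimension. An ideal of the algebra of functions on
a finite set consists of the functions vanishing on its zero locus, so the quotient is the algebra
of functions on that locus. A generator of `R'(1)` vanishes at a point exactly when two of the three
coordinates involved agree; hence the zero locus is the set of tuples with at most two distinct
values, which are counted directly.
-/

section TwoValues

open Finset

variable {ι α : Type*}

/-- The tuple `c` takes at most two distinct values. The condition is phrased on triples of indices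
because the generators of `R'(1)` are indexed by triples. -/
def AtMostTwoValues (c : ι → α) : Prop :=
  ∀ i j k, c i = c j ∨ c i = c k ∨ c j = c k

theorem atMostTwoValues_iff_forall_lt [LinearOrder ι] {c : ι → α} :
    AtMostTwoValues c ↔ ∀ i j k, i < j → j < k → c i = c j ∨ c i = c k ∨ c j = c k := by
  refine ⟨fun h i j k _ _ => h i j k, fun h i j k => ?_⟩
  wlog hij : i ≤ j generalizing i j
  · grind
  wlog hjk : j ≤ k generalizing i j k
  · grind
  obtain rfl | hij := hij.eq_or_lt
  · exact .inl rfl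
  obtain rfl | hjk := hjk.eq_or_lt
  · exact .inr (.inr rfl)
  exact h i j k hij hjk

theorem atMostTwoValues_iff_exists (i₀ : ι) {c : ι → α} :
    AtMostTwoValues c ↔ ∃ b, ∀ i, c i = c i₀ ∨ c i = b := by
  constructor
  · intro h
    by_cases hconst : ∀ i, c i = c i₀
    · exact ⟨c i₀, fun i => .inl (hconst i)⟩
    · push Not at hconst
      obtain ⟨s, hs⟩ := hconst
      exact ⟨c s, fun i => by grind [h i i₀ s]⟩
  · rintro ⟨b, hb⟩ i j k
    grind

open scoped Classical in
theorem card_filter_forall_eq [Fintype ι] [Fintype α] (i₀ : ι) :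
    #{c : ι → α | ∀ i, c i = c i₀} = Fintype.card α := by
  have : Nonempty ι := ⟨i₀⟩
  have himage : ({c : ι → α | ∀ i, c i = c i₀} : Finset (ι → α)) =
      univ.image (Function.const ι) := by
    ext c
    simp only [mem_filter_univ, mem_image, mem_univ, true_and]
    exact ⟨fun h => ⟨c i₀, funext fun i => (h i).symm⟩, by rintro ⟨a, rfl⟩ i; rfl⟩
  rw [himage, card_image_of_injective _ Function.const_injective, card_univ]

-- A non-constant `c` with at most two values is determined by its value `a` at `i₀`, its other
-- value `b`, and the nonempty set of indices, not containing `i₀`, at which it takes the value `b`.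
open scoped Classical in
theorem card_filter_atMostTwoValues_not_forall_eq [Fintype ι] [Fintype α] (i₀ : ι) :
    #{c : ι → α | AtMostTwoValues c ∧ ¬ ∀ i, c i = c i₀} =
      #((univ : Finset α).offDiag ×ˢ (univ.erase i₀).powerset.erase ∅) := by
  have hmem {a b : α} {S : Finset ι} :
      ((a, b), S) ∈ (univ : Finset α).offDiag ×ˢ (univ.erase i₀).powerset.erase ∅ ↔
        a ≠ b ∧ S.Nonempty ∧ i₀ ∉ S := by
    simp [subset_erase, nonempty_iff_ne_empty]
  simp only [atMostTwoValues_iff_exists i₀]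
  symm
  refine card_bij (fun t _ i => if i ∈ t.2 then t.1.2 else t.1.1) ?_ ?_ ?_
  · rintro ⟨⟨a, b⟩, S⟩ h
    obtain ⟨hab, ⟨s, hs⟩, hi₀⟩ := hmem.mp h
    exact (mem_filter_univ _).mpr ⟨⟨b, by grind⟩, fun hconst => hab (by grind)⟩
  · rintro ⟨⟨a, b⟩, S⟩ h ⟨⟨a', b'⟩, S'⟩ h' heq
    obtain ⟨hab, ⟨s, hs⟩, hi₀⟩ := hmem.mp h
    obtain ⟨hab', -, hi₀'⟩ := hmem.mp h'
    replace heq := congrFun heq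
    dsimp only at heq
    obtain rfl : a = a' := by simpa [hi₀, hi₀'] using heq i₀
    obtain rfl : S = S' := by grind
    obtain rfl : b = b' := by simpa [hs] using heq s
    rfl
  · intro c hc
    obtain ⟨⟨b, hb⟩, hconst⟩ := (mem_filter_univ c).mp hc
    refine ⟨((c i₀, b), ({i | c i ≠ c i₀} : Finset ι)), hmem.mpr ?_, ?_⟩
    · push Not at hconst
      obtain ⟨s, hs⟩ := hconst
      exact ⟨fun h => hs (by grind), ⟨s, by simpa using hs⟩, by simp⟩
    · grind

theorem card_atMostTwoValues [Finite ι] [Nonempty ι] [Finite α] :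
    Nat.card {c : ι → α // AtMostTwoValues c} =
      Nat.card α + Nat.card α * (Nat.card α - 1) * (2 ^ (Nat.card ι - 1) - 1) := by
  classical
  have := Fintype.ofFinite ι
  have := Fintype.ofFinite α
  let i₀ := Classical.arbitrary ι
  have hconst : ∀ c : ι → α, (AtMostTwoValues c ∧ ∀ i, c i = c i₀) ↔ ∀ i, c i = c i₀ :=
    fun c => and_iff_right_of_imp fun h i j k => .inl ((h i).trans (h j).symm)
  rw [Nat.card_eq_fintype_card, Fintype.card_subtype,
    ← card_filter_add_card_filter_not (fun c : ι → α => ∀ i, c i = c i₀), filter_filter,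
    filter_filter]
  simp only [hconst, card_filter_forall_eq, card_filter_atMostTwoValues_not_forall_eq]
  simp [offDiag_card, card_erase_of_mem, Nat.mul_sub]

end TwoValues

section FunctionAlgebra

theorem mem_span_iff_of_divisionSemiring {K : Type*} [DivisionSemiring K] {T : Set K} {a : K} :
    a ∈ Ideal.span T ↔ (∀ t ∈ T, t = 0) → a = 0 := by
  by_cases h : ∀ t ∈ T, t = 0
  · rw [Ideal.span_eq_bot.mpr h, Ideal.mem_bot, imp_iff_right h]
  · have htop := (Ideal.span T).eq_bot_or_top.resolve_left (mt Ideal.span_eq_bot.mp h)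
    simp [htop, h]

theorem mem_span_pi_iff {X : Type*} [Finite X] {K : X → Type*} [∀ x, DivisionSemiring (K x)]
    {S : Set (∀ x, K x)} {f : ∀ x, K x} :
    f ∈ Ideal.span S ↔ ∀ x, (∀ p ∈ S, p x = 0) → f x = 0 := by
  have hpi : Ideal.pi (fun x => (Ideal.span S).map (Pi.evalRingHom K x)) = Ideal.span S :=
    Ideal.piOrderIso.symm_apply_apply (Ideal.span S)
  rw [← hpi]
  simp only [Ideal.mem_pi, Ideal.map_span, mem_span_iff_of_divisionSemiring, Set.forall_mem_image,
    Pi.evalRingHom_apply]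

variable {K A X : Type*} [Field K] [Finite X]

theorem surjective_algHomPi_of_injective [Semiring A] [Algebra K A] {ev : X → A →ₐ[K] K}
    (hev : Function.Injective ev) : Function.Surjective (AlgHom.pi ev) := by
  have hindep : LinearIndependent K fun x (a : A) => ev x a :=
    (linearIndependent_monoidHom A K).comp (fun x => (ev x : A →* K))
      fun x y h => hev (AlgHom.ext fun a => DFunLike.congr_fun h a)
  have hspan := span_flip_eq_top_iff_linearIndependent.mpr hindep
  have : Set.range (flip fun x (a : A) => ev x a) = Set.range (AlgHom.pi ev).toLinearMap := rfl
  rw [this, ← LinearMap.coe_range, Submodule.span_eq, LinearMap.range_eq_top] at hspan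
  exact hspan

theorem bijective_algHomPi_of_injective [Ring A] [Algebra K A]
    [FiniteDimensional K A] {ev : X → A →ₐ[K] K} (hev : Function.Injective ev)
    (hcard : Module.finrank K A = Nat.card X) : Function.Bijective (AlgHom.pi ev) := by
  have := Fintype.ofFinite X
  have hfinrank : Module.finrank K A = Module.finrank K (X → K) := by
    rw [hcard, Module.finrank_fintype_fun_eq_card, Nat.card_eq_fintype_card]
  have hsurj := surjective_algHomPi_of_injective hev
  exact ⟨(LinearMap.injective_iff_surjective_of_finrank_eq_finrank
    (f := (AlgHom.pi ev).toLinearMap) hfinrank).mpr hsurj, hsurj⟩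

variable [CommRing A] [Algebra K A] [FiniteDimensional K A] {ev : X → A →ₐ[K] K}

theorem mem_span_iff_forall_algHom (hev : Function.Injective ev)
    (hcard : Module.finrank K A = Nat.card X) {S : Set A} {f : A} :
    f ∈ Ideal.span S ↔ ∀ x, (∀ p ∈ S, ev x p = 0) → ev x f = 0 := by
  have hbij : Function.Bijective (AlgHom.pi ev) := bijective_algHomPi_of_injective hev hcard
  have hmap : f ∈ Ideal.span S ↔ AlgHom.pi ev f ∈ Ideal.span (AlgHom.pi ev '' S) := by
    rw [← Ideal.map_span, ← Ideal.mem_comap, Ideal.comap_map_of_bijective _ hbij]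
  simp only [hmap, mem_span_pi_iff, Set.forall_mem_image, AlgHom.pi_apply]

/-- The coordinate ring of a zero locus: if the points `x : X` are as many distinct `K`-valued
characters `ev x` of `A` as the dimension of `A`, then `A ⧸ (S)` is the algebra of functions on the
common zeros of `S`. -/
noncomputable def quotientSpanEquivZeroLocus (hev : Function.Injective ev)
    (hcard : Module.finrank K A = Nat.card X) (S : Set A) :
    (A ⧸ Ideal.span S) ≃ₐ[K] ({x // ∀ p ∈ S, ev x p = 0} → K) :=
  have hker : Ideal.span S =
      RingHom.ker (AlgHom.pi fun x : {x // ∀ p ∈ S, ev x p = 0} => ev x) := by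
    ext f
    simp only [mem_span_iff_forall_algHom hev hcard, RingHom.mem_ker, funext_iff, Subtype.forall,
      AlgHom.pi_apply, Pi.zero_apply]
  (Ideal.quotientEquivAlgOfEq K hker).trans <| Ideal.quotientKerAlgEquivOfSurjective <|
    surjective_algHomPi_of_injective (hev.comp Subtype.val_injective)

end FunctionAlgebra

section Evaluation

variable {ι R K : Type*} [Fintype ι] [CommRing R] [CommSemiring K]

/-- Evaluation of the group algebra of `R^ι` at the point with coordinates `ψ (c j)`. It comes from
the character `g ↦ ψ (∑ j, c j * g j)` of `R^ι`. -/
noncomputable def evalAt (ψ : AddChar R K) (c : ι → R) :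
    MonoidAlgebra K (Multiplicative (ι → R)) →ₐ[K] K :=
  MonoidAlgebra.lift K K _
    (ψ.compAddMonoidHom (dotProductBilin R R c).toAddMonoidHom).toMonoidHom

theorem evalAt_of (ψ : AddChar R K) (c g : ι → R) :
    evalAt ψ c (MonoidAlgebra.of K _ (.ofAdd g)) = ψ (c ⬝ᵥ g) := by
  simp [evalAt]

theorem evalAt_injective {ψ : AddChar R K} (hψ : ψ.IsPrimitive) :
    Function.Injective (evalAt (ι := ι) ψ) := by
  classical
  intro c c' h
  funext j
  refine AddChar.to_mulShift_inj_of_isPrimitive hψ (DFunLike.ext _ _ fun r => ?_)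
  have := DFunLike.congr_fun h (MonoidAlgebra.of K _ (.ofAdd (Pi.single j r)))
  simpa only [evalAt_of, dotProduct_single, AddChar.mulShift_apply] using this

end Evaluation

section Rone

variable {d n : ℕ}

theorem xgen_succ (j : Fin n) :
    xgen d n (j + 1) = MonoidAlgebra.of ℂ _ (.ofAdd (Pi.single j 1)) := by
  rw [xgen, mono]
  congr 2
  ext i
  simp [Pi.single_apply, Fin.ext_iff]

theorem evalAt_xgen_succ (ψ : AddChar (ZMod d) ℂ) (c : Fin n → ZMod d) (j : Fin n) :
    evalAt ψ c (xgen d n (j + 1)) = ψ (c j) := by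
  rw [xgen_succ, evalAt_of, dotProduct_single_one]

variable (d n) in
/-- The generators of the ideal `R'(1)`. -/
def roneGenerators : Set (Adn d n) :=
  {p | ∃ i j k : ℕ, 1 ≤ i ∧ i < j ∧ j < k ∧ k ≤ n ∧
    p = (xgen d n i - xgen d n j) * (xgen d n i - xgen d n k) * (xgen d n j - xgen d n k)}

theorem forall_mem_roneGenerators {P : Adn d n → Prop} :
    (∀ p ∈ roneGenerators d n, P p) ↔ ∀ i j k : Fin n, i < j → j < k →
      P ((xgen d n (i + 1) - xgen d n (j + 1)) * (xgen d n (i + 1) - xgen d n (k + 1)) *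
        (xgen d n (j + 1) - xgen d n (k + 1))) := by
  constructor
  · intro h i j k hij hjk
    exact h _ ⟨i + 1, j + 1, k + 1, by lia, by lia, by lia, by lia, rfl⟩
  · rintro h _ ⟨i, j, k, hi, hij, hjk, hk, rfl⟩
    have hfin {s : ℕ} (h₁ : 1 ≤ s) (hs : s ≤ n) : ∃ t : Fin n, (t : ℕ) + 1 = s :=
      ⟨⟨s - 1, by lia⟩, Nat.sub_add_cancel h₁⟩
    obtain ⟨i, rfl⟩ := hfin hi (by lia)
    obtain ⟨j, rfl⟩ := hfin (s := j) (by lia) (by lia)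
    obtain ⟨k, rfl⟩ := hfin (s := k) (by lia) hk
    exact h i j k (by lia) (by lia)

theorem forall_evalAt_roneGenerators_eq_zero_iff {ψ : AddChar (ZMod d) ℂ}
    (hψ : Function.Injective ψ) (c : Fin n → ZMod d) :
    (∀ p ∈ roneGenerators d n, evalAt ψ c p = 0) ↔ AtMostTwoValues c := by
  simp only [forall_mem_roneGenerators, atMostTwoValues_iff_forall_lt, map_mul, map_sub,
    evalAt_xgen_succ, mul_eq_zero, sub_eq_zero, hψ.eq_iff, or_assoc]

variable (d n) in
/-- The identification of `A_{d,n} / R'(1)` with the algebra of functions on the tuples of `d`-th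
roots of unity with at most two distinct entries. The roots of unity `exp (2πi c_j / d)` are encoded
by the tuple `c` of their exponents. -/
noncomputable def quotientRoneEquiv [NeZero d] :
    (Adn d n ⧸ Rone d n) ≃ₐ[ℂ] ({c : Fin n → ZMod d // AtMostTwoValues c} → ℂ) :=
  let b : Module.Basis _ ℂ (Adn d n) := MonoidAlgebra.basis _ ℂ
  have : FiniteDimensional ℂ (Adn d n) := .of_basis b
  have hcard : Module.finrank ℂ (Adn d n) = Nat.card (Fin n → ZMod d) :=
    Module.finrank_eq_nat_card_basis b
  (quotientSpanEquivZeroLocus (evalAt_injective (ZMod.isPrimitive_stdAddChar d)) hcard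
    (roneGenerators d n)).trans <| AlgEquiv.piCongrLeft ℂ (fun _ => ℂ) <|
    Equiv.subtypeEquivRight <|
      forall_evalAt_roneGenerators_eq_zero_iff (ZMod.injective_stdAddChar (N := d))

end Rone

theorem stmt10 (d n : ℕ) (hd : 1 ≤ d) (hn : 1 ≤ n) :
    FiniteDimensional ℂ (Adn d n ⧸ Rone d n) ∧
    (Module.finrank ℂ (Adn d n ⧸ Rone d n) : ℤ) =
      (2 ^ (n - 1) - 1) * (d : ℤ) ^ 2 - (2 ^ (n - 1) - 2) * (d : ℤ) := by
  have : NeZero d := ⟨by lia⟩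
  have : NeZero n := ⟨by lia⟩
  have e := (quotientRoneEquiv d n).toLinearEquiv
  have hcard : Module.finrank ℂ (Adn d n ⧸ Rone d n) =
      d + d * (d - 1) * (2 ^ (n - 1) - 1) := by
    classical
    rw [e.finrank_eq, Module.finrank_fintype_fun_eq_card, ← Nat.card_eq_fintype_card,
      card_atMostTwoValues, Nat.card_zmod, Nat.card_fin]
  refine ⟨.equiv e.symm, ?_⟩
  rw [hcard]
  push_cast [hd, Nat.one_le_two_pow]
  ring
end

section
/- In the Yokonuma–Hecke algebra Y_{d,n}(u) with n≥3, set G_{i,i+1} := g_i g_{i+1} g_i + g_i g_{i+1} + g_{i+1} g_i + g_i + g_{i+1} + 1 for 1≤i≤n−2, and let w := g_1 g_2 ⋯ g_{n−1} (an invertible element). Then for every 1≤i≤n−2, G_{i,i+1} = w^{i−1} · G_{1,2} · w^{−(i−1)}. Consequently the two-sided ideal of Y_{d,n}(u) generated by G_{1,2},…,G_{n−2,n−1} equals the two-sided ideal generated by the single element G_{1,2}. -/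
noncomputable section

/-- The field `K = ℂ(u)` of rational functions over `ℂ`. -/
abbrev K : Type := RatFunc ℂ

/-- The indeterminate `u ∈ ℂ(u)`. -/
def uu : K := RatFunc.X

/-- The free `K`-algebra on generators `g_i` (`i : ℕ`, left summand) and `t_j`
(`j : ℕ`, right summand); the generators with invalid indices are killed by the relations. -/
abbrev FA : Type := FreeAlgebra K (ℕ ⊕ ℕ)

/-- The free generator `g_i`. -/
def Gf (i : ℕ) : FA := FreeAlgebra.ι K (Sum.inl i)

/-- The free generator `t_j`. -/
def Tf (j : ℕ) : FA := FreeAlgebra.ι K (Sum.inr j)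

/-- The element `e_i = (1/d) ∑_{s=0}^{d-1} t_i^s t_{i+1}^{d-s}`. -/
def ef (d i : ℕ) : FA :=
  ((d : K)⁻¹) • ∑ s ∈ Finset.range d, Tf i ^ s * Tf (i + 1) ^ (d - s)

/-- The transposition `s_i = (i, i+1)` applied to `j`. -/
def swapIdx (i j : ℕ) : ℕ := if j = i then i + 1 else if j = i + 1 then i else j

/-- The defining relations of the Yokonuma–Hecke algebra `Y_{d,n}(u)`, together with junk
relations killing the generators with out-of-range indices (so that the quotient is presented
exactly by `g_1, …, g_{n-1}, t_1, …, t_n`). -/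
inductive YRel (d n : ℕ) : FA → FA → Prop
  | commute (i j : ℕ) (hi : 1 ≤ i) (hin : i + 1 ≤ n) (hj : 1 ≤ j) (hjn : j + 1 ≤ n)
      (hfar : i + 1 < j ∨ j + 1 < i) :
      YRel d n (Gf i * Gf j) (Gf j * Gf i)
  | braid (i : ℕ) (hi : 1 ≤ i) (hin : i + 2 ≤ n) :
      YRel d n (Gf i * Gf (i + 1) * Gf i) (Gf (i + 1) * Gf i * Gf (i + 1))
  | tcomm (i j : ℕ) (hi : 1 ≤ i) (hin : i ≤ n) (hj : 1 ≤ j) (hjn : j ≤ n) :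
      YRel d n (Tf i * Tf j) (Tf j * Tf i)
  | tg (i j : ℕ) (hi : 1 ≤ i) (hin : i + 1 ≤ n) (hj : 1 ≤ j) (hjn : j ≤ n) :
      YRel d n (Tf j * Gf i) (Gf i * Tf (swapIdx i j))
  | torder (j : ℕ) (hj : 1 ≤ j) (hjn : j ≤ n) :
      YRel d n (Tf j ^ d) 1
  | quad (i : ℕ) (hi : 1 ≤ i) (hin : i + 1 ≤ n) :
      YRel d n (Gf i ^ 2) (1 + (uu - 1) • ef d i + (uu - 1) • (ef d i * Gf i))
  | gjunk (i : ℕ) (h : i = 0 ∨ n ≤ i) : YRel d n (Gf i) 0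
  | tjunk (j : ℕ) (h : j = 0 ∨ n < j) : YRel d n (Tf j) 0

/-- The Yokonuma–Hecke algebra `Y_{d,n}(u)`. -/
abbrev YH (d n : ℕ) : Type := RingQuot (YRel d n)

/-- The generator `g_i` of `Y_{d,n}(u)`. -/
def yg (d n : ℕ) (i : ℕ) : YH d n := RingQuot.mkAlgHom K (YRel d n) (Gf i)

/-- The generator `t_j` of `Y_{d,n}(u)`. -/
def yt (d n : ℕ) (j : ℕ) : YH d n := RingQuot.mkAlgHom K (YRel d n) (Tf j)

/-- The idempotent `e_i ∈ Y_{d,n}(u)`. -/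
def ye (d n : ℕ) (i : ℕ) : YH d n := RingQuot.mkAlgHom K (YRel d n) (ef d i)

end

noncomputable section

/-- The element `G_{i,i+1} = g_i g_{i+1} g_i + g_i g_{i+1} + g_{i+1} g_i + g_i + g_{i+1} + 1`
of `Y_{d,n}(u)`. -/
def GG (d n : ℕ) (i : ℕ) : YH d n :=
  yg d n i * yg d n (i + 1) * yg d n i + yg d n i * yg d n (i + 1) +
    yg d n (i + 1) * yg d n i + yg d n i + yg d n (i + 1) + 1

/-- The element `w = g_1 g_2 ⋯ g_{n-1}` of `Y_{d,n}(u)`. -/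
def ww (d n : ℕ) : YH d n := ((List.range' 1 (n - 1)).map (yg d n)).prod

end

/-!
Only the braid relations matter for the conjugation formula: moving `w = g_1 ⋯ g_{n-1}` past `g_i`
involves the far commutations and one use of `g_i g_{i+1} g_i = g_{i+1} g_i g_{i+1}`, and gives
`w g_i = g_{i+1} w`. Hence `w` also intertwines any polynomial in `g_i, g_{i+1}` with its shift, so
all `G_{i,i+1}` are conjugate once `w` is invertible.

The invertibility of `w` comes from the quadratic relation. With `c = t_i t_{i+1}^{-1}`, so that
`c ^ d = 1`, the element `e_i` is the average of the powers of `c`, hence idempotent; it commutes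
with `g_i` because conjugation by `g_i` sends `c` to `c⁻¹`. Then
`g_i⁻¹ = g_i + (u⁻¹ - 1) e_i + (u⁻¹ - 1) e_i g_i`.
-/

section BraidFamily

/-- The family `g 1, …, g (n - 1)` satisfies the braid relations of type `A`; the values of `g`
outside `[1, n - 1]` are unconstrained. -/
structure IsBraidFamily {M : Type*} [Mul M] (n : ℕ) (g : ℕ → M) : Prop where
  commute {i j : ℕ} (hi : 1 ≤ i) (hij : i + 1 < j) (hj : j < n) : Commute (g i) (g j)
  braid {i : ℕ} (hi : 1 ≤ i) (hin : i + 1 < n) :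
    g i * g (i + 1) * g i = g (i + 1) * g i * g (i + 1)

/-- The Coxeter product `g 1 * ⋯ * g (n - 1)`, the image of the standard Coxeter element of the
symmetric group on `n` letters. -/
def coxeterProd {M : Type*} [Monoid M] (g : ℕ → M) (n : ℕ) : M :=
  ((List.range' 1 (n - 1)).map g).prod

/-- The sum of the images of the six elements of the parabolic subgroup generated by the simple
reflections `i` and `i + 1`; it specialises to `G_{i,i+1}`. -/
def parabolicSum {R : Type*} [Semiring R] (g : ℕ → R) (i : ℕ) : R :=
  g i * g (i + 1) * g i + g i * g (i + 1) + g (i + 1) * g i + g i + g (i + 1) + 1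

lemma coxeterProd_succ {M : Type*} [Monoid M] (g : ℕ → M) {n : ℕ} (hn : 1 ≤ n) :
    coxeterProd g (n + 1) = coxeterProd g n * g n := by
  obtain ⟨k, rfl⟩ := Nat.exists_eq_add_of_le hn
  simp [coxeterProd, add_comm 1 k, List.range'_1_concat]

lemma isUnit_coxeterProd {M : Type*} [Monoid M] {g : ℕ → M} {n : ℕ}
    (hg : ∀ i, 1 ≤ i → i < n → IsUnit (g i)) : IsUnit (coxeterProd g n) := by
  refine List.prod_isUnit fun x hx => ?_
  obtain ⟨i, hi, rfl⟩ := List.mem_map.1 hx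
  rw [List.mem_range'_1] at hi
  exact hg i hi.1 (by omega)

namespace IsBraidFamily

section Monoid

variable {M : Type*} [Monoid M] {g : ℕ → M} {n : ℕ}

lemma commute_coxeterProd (hg : IsBraidFamily n g) {i j : ℕ}
    (hij : i < j) (hj : j < n) : Commute (coxeterProd g i) (g j) := by
  refine Commute.list_prod_left _ _ fun x hx => ?_
  obtain ⟨k, hk, rfl⟩ := List.mem_map.1 hx
  rw [List.mem_range'_1] at hk
  exact hg.commute hk.1 (by omega) hj

lemma semiconjBy_coxeterProd (hg : IsBraidFamily n g) {i : ℕ}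
    (hi : 1 ≤ i) (hin : i + 1 < n) : SemiconjBy (coxeterProd g n) (g i) (g (i + 1)) := by
  suffices ∀ m, i + 2 ≤ m → m ≤ n → SemiconjBy (coxeterProd g m) (g i) (g (i + 1)) from
    this n hin le_rfl
  intro m him
  induction m, him using Nat.le_induction with
  | base =>
    intro _
    have hbraid : SemiconjBy (g i * g (i + 1)) (g i) (g (i + 1)) := by
      rw [SemiconjBy, hg.braid hi hin, mul_assoc]
    rw [coxeterProd_succ g (by omega), coxeterProd_succ g hi, mul_assoc]
    exact SemiconjBy.mul_left (hg.commute_coxeterProd (by omega) hin) hbraid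
  | succ m him ih =>
    intro hmn
    rw [coxeterProd_succ g (by omega)]
    exact (ih (by omega)).mul_left (hg.commute hi (by omega) (by omega)).symm

end Monoid

section Semiring

variable {R : Type*} [Semiring R] {g : ℕ → R} {n : ℕ}

lemma semiconjBy_coxeterProd_parabolicSum (hg : IsBraidFamily n g)
    {i : ℕ} (hi : 1 ≤ i) (hin : i + 2 < n) :
    SemiconjBy (coxeterProd g n) (parabolicSum g i) (parabolicSum g (i + 1)) := by
  have h₁ := hg.semiconjBy_coxeterProd hi (by omega)
  have h₂ := hg.semiconjBy_coxeterProd (i := i + 1) (by omega) hin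
  exact ((h₁.mul_right h₂ |>.mul_right h₁).add_right (h₁.mul_right h₂)
    |>.add_right (h₂.mul_right h₁) |>.add_right h₁ |>.add_right h₂).add_right (.one_right _)

lemma semiconjBy_coxeterProd_pow_parabolicSum (hg : IsBraidFamily n g)
    {k : ℕ} (hk : k + 2 < n) :
    SemiconjBy (coxeterProd g n ^ k) (parabolicSum g 1) (parabolicSum g (k + 1)) := by
  induction k with
  | zero => simp
  | succ k ih =>
    rw [pow_succ']
    exact (hg.semiconjBy_coxeterProd_parabolicSum (by omega) hk).mul_left (ih (by omega))

lemma parabolicSum_eq_conj (hg : IsBraidFamily n g) {w : Rˣ}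
    (hw : w = coxeterProd g n) {i : ℕ} (hi : 1 ≤ i) (hin : i + 1 < n) :
    parabolicSum g i =
      coxeterProd g n ^ (i - 1) * parabolicSum g 1 * (↑w⁻¹ : R) ^ (i - 1) := by
  have h := hg.semiconjBy_coxeterProd_pow_parabolicSum (k := i - 1) (by omega)
  rw [Nat.sub_add_cancel hi, ← hw, ← Units.val_pow_eq_pow_val] at h
  rw [← hw, ← Units.val_pow_eq_pow_val, ← Units.val_pow_eq_pow_val, inv_pow,
    Units.eq_mul_inv_iff_mul_eq, h.eq]

end Semiring

end IsBraidFamily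

end BraidFamily

section GeomSum

variable {R : Type*} [Ring R] {c : R} {d : ℕ}

lemma mul_geom_sum_of_pow_eq_one (hc : c ^ d = 1) :
    c * ∑ s ∈ Finset.range d, c ^ s = ∑ s ∈ Finset.range d, c ^ s := by
  rw [← sub_eq_zero, ← sub_one_mul, mul_geom_sum, hc, sub_self]

lemma pow_mul_geom_sum_of_pow_eq_one (hc : c ^ d = 1) (k : ℕ) :
    c ^ k * ∑ s ∈ Finset.range d, c ^ s = ∑ s ∈ Finset.range d, c ^ s := by
  induction k with
  | zero => simp
  | succ k ih => rw [pow_succ, mul_assoc, mul_geom_sum_of_pow_eq_one hc, ih]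

lemma geom_sum_mul_self_of_pow_eq_one (hc : c ^ d = 1) :
    (∑ s ∈ Finset.range d, c ^ s) * ∑ s ∈ Finset.range d, c ^ s =
      d • ∑ s ∈ Finset.range d, c ^ s := by
  simp only [Finset.sum_mul _ _ (∑ s ∈ Finset.range d, c ^ s), pow_mul_geom_sum_of_pow_eq_one hc,
    Finset.sum_const, Finset.card_range]

lemma isIdempotentElem_inv_smul_geom_sum {F : Type*} [Field F] [Algebra F R] (hd : (d : F) ≠ 0)
    (hc : c ^ d = 1) : IsIdempotentElem ((d : F)⁻¹ • ∑ s ∈ Finset.range d, c ^ s) := by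
  rw [IsIdempotentElem, smul_mul_smul_comm, geom_sum_mul_self_of_pow_eq_one hc,
    ← Nat.cast_smul_eq_nsmul F, smul_smul, mul_assoc, inv_mul_cancel₀ hd, mul_one]

lemma pow_eq_pow_sub_of_mul_eq_one {M : Type*} [Monoid M] {b b' : M} (hb : b ^ d = 1)
    (hbb' : b * b' = 1) {s : ℕ} (hs : s ≤ d) : b' ^ s = b ^ (d - s) :=
  (left_inv_eq_right_inv (by rw [pow_sub_mul_pow _ hs, hb]) (pow_mul_pow_eq_one s hbb')).symm

lemma geom_sum_eq_of_mul_eq_one {c' : R} (hc : c ^ d = 1) (hcc' : c * c' = 1) :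
    ∑ s ∈ Finset.range d, c' ^ s = ∑ s ∈ Finset.range d, c ^ s := by
  rw [← mul_geom_sum_of_pow_eq_one hc, ← Finset.sum_range_reflect (fun s => c ^ s),
    Finset.mul_sum]
  refine Finset.sum_congr rfl fun s hs => ?_
  have hsd : s < d := Finset.mem_range.1 hs
  rw [pow_eq_pow_sub_of_mul_eq_one hc hcc' hsd.le, ← pow_succ']
  congr 1
  omega

lemma commute_geom_sum_of_semiconjBy {g c' : R} (hc : c ^ d = 1) (hcc' : c * c' = 1)
    (hg : SemiconjBy g c c') : Commute g (∑ s ∈ Finset.range d, c ^ s) := by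
  rw [Commute, SemiconjBy]
  nth_rewrite 2 [← geom_sum_eq_of_mul_eq_one hc hcc']
  rw [Finset.mul_sum, Finset.sum_mul]
  exact Finset.sum_congr rfl fun s _ => (hg.pow_right s).eq

lemma sum_pow_mul_pow_sub_eq_geom_sum {S : Type*} [Semiring S] {a b b' : S}
    (hab' : Commute a b') (hb : b ^ d = 1) (hbb' : b * b' = 1) :
    ∑ s ∈ Finset.range d, a ^ s * b ^ (d - s) = ∑ s ∈ Finset.range d, (a * b') ^ s := by
  refine Finset.sum_congr rfl fun s hs => ?_
  rw [hab'.mul_pow, pow_eq_pow_sub_of_mul_eq_one hb hbb' (Finset.mem_range.1 hs).le]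

end GeomSum

lemma isUnit_of_sq_eq {F R : Type*} [CommRing F] [Ring R] [Algebra F R] {q : Fˣ} {e g : R}
    (he : IsIdempotentElem e) (hge : Commute g e)
    (hg : g ^ 2 = 1 + (q - 1 : F) • e + (q - 1 : F) • (e * g)) : IsUnit g := by
  set g' : R := g + (↑q⁻¹ - 1 : F) • e + (↑q⁻¹ - 1 : F) • (e * g) with hg'
  have hcomm : Commute g g' :=
    ((Commute.refl g).add_right (hge.smul_right _)).add_right
      ((hge.mul_right (Commute.refl g)).smul_right _)
  have hegg : e * g ^ 2 = (q : F) • e + (q - 1 : F) • (e * g) := by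
    rw [hg]
    simp only [mul_add, mul_one, mul_smul_comm, ← mul_assoc, he.eq]
    module
  have hinv : g * g' = 1 := calc
    g * g' = g ^ 2 + (↑q⁻¹ - 1 : F) • (e * g) + (↑q⁻¹ - 1 : F) • (e * g ^ 2) := by
      rw [hg', mul_add, mul_add, mul_smul_comm, mul_smul_comm, ← mul_assoc, hge.eq, mul_assoc,
        ← pow_two]
    _ = 1 + (↑q⁻¹ * ↑q - 1 : F) • (e + e * g) := by
      rw [hegg, hg]
      module
    _ = 1 := by rw [Units.inv_mul, sub_self, zero_smul, add_zero]
  exact ⟨⟨g, g', hinv, hcomm.eq ▸ hinv⟩, rfl⟩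

section YokonumaHecke

variable {d n : ℕ}

lemma isBraidFamily_yg : IsBraidFamily n (yg d n) where
  commute hi hij hj := by
    simpa only [Commute, SemiconjBy, yg, map_mul] using
      RingQuot.mkAlgHom_rel K (YRel.commute (d := d) _ _ hi (by omega) (by omega) hj (.inl hij))
  braid hi hin := by
    simpa only [yg, map_mul] using RingQuot.mkAlgHom_rel K (YRel.braid (d := d) _ hi hin)

lemma yt_commute {i j : ℕ} (hi : 1 ≤ i) (hin : i ≤ n) (hj : 1 ≤ j) (hjn : j ≤ n) :
    Commute (yt d n i) (yt d n j) := by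
  simpa only [Commute, SemiconjBy, yt, map_mul] using
    RingQuot.mkAlgHom_rel K (YRel.tcomm (d := d) i j hi hin hj hjn)

lemma yt_pow {j : ℕ} (hj : 1 ≤ j) (hjn : j ≤ n) : yt d n j ^ d = 1 := by
  simpa only [yt, map_pow, map_one] using RingQuot.mkAlgHom_rel K (YRel.torder (d := d) j hj hjn)

lemma yg_semiconjBy_yt {i j : ℕ} (hi : 1 ≤ i) (hin : i + 1 ≤ n) (hj : 1 ≤ j) (hjn : j ≤ n) :
    SemiconjBy (yg d n i) (yt d n (swapIdx i j)) (yt d n j) := by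
  simpa only [SemiconjBy, yg, yt, map_mul] using
    (RingQuot.mkAlgHom_rel K (YRel.tg (d := d) i j hi hin hj hjn)).symm

lemma yg_sq {i : ℕ} (hi : 1 ≤ i) (hin : i + 1 ≤ n) :
    yg d n i ^ 2 = 1 + (uu - 1) • ye d n i + (uu - 1) • (ye d n i * yg d n i) := by
  simpa only [yg, ye, map_pow, map_add, map_one, map_smul, map_mul] using
    RingQuot.mkAlgHom_rel K (YRel.quad (d := d) i hi hin)

/-- The element `t_i t_{i+1}⁻¹`, whose powers average to `e_i`. The inverse is written as the power
`d - 1`, so this reading requires `1 ≤ d` and `1 ≤ i < n`. -/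
noncomputable def tRatio (d n i : ℕ) : YH d n := yt d n i * yt d n (i + 1) ^ (d - 1)

lemma tRatio_pow {i : ℕ} (hi : 1 ≤ i) (hin : i + 1 ≤ n) : tRatio d n i ^ d = 1 := by
  have hcomm := yt_commute (d := d) hi (by omega) (by omega) hin
  rw [tRatio, (hcomm.pow_right _).mul_pow, yt_pow hi (by omega), pow_right_comm,
    yt_pow (by omega) hin, one_pow, one_mul]

lemma yt_mul_pow_sub_one (hd : 1 ≤ d) {j : ℕ} (hj : 1 ≤ j) (hjn : j ≤ n) :
    yt d n j * yt d n j ^ (d - 1) = 1 := by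
  rw [mul_pow_sub_one (by omega), yt_pow hj hjn]

lemma ye_eq_inv_smul_geom_sum_tRatio (hd : 1 ≤ d) {i : ℕ} (hi : 1 ≤ i) (hin : i + 1 ≤ n) :
    ye d n i = (d : K)⁻¹ • ∑ s ∈ Finset.range d, tRatio d n i ^ s := by
  have hcomm := yt_commute (d := d) hi (by omega) (by omega) hin
  rw [ye, ef, map_smul, map_sum]
  simp only [map_mul, map_pow]
  exact congrArg _ (sum_pow_mul_pow_sub_eq_geom_sum (hcomm.pow_right _) (yt_pow (by omega) hin)
    (yt_mul_pow_sub_one hd (by omega) hin))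

lemma isIdempotentElem_ye (hd : 1 ≤ d) {i : ℕ} (hi : 1 ≤ i) (hin : i + 1 ≤ n) :
    IsIdempotentElem (ye d n i) := by
  rw [ye_eq_inv_smul_geom_sum_tRatio hd hi hin]
  exact isIdempotentElem_inv_smul_geom_sum (Nat.cast_ne_zero.2 (by omega)) (tRatio_pow hi hin)

lemma yg_commute_ye (hd : 1 ≤ d) {i : ℕ} (hi : 1 ≤ i) (hin : i + 1 ≤ n) :
    Commute (yg d n i) (ye d n i) := by
  have h₁ : SemiconjBy (yg d n i) (yt d n i) (yt d n (i + 1)) := by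
    simpa [swapIdx] using yg_semiconjBy_yt (d := d) (j := i + 1) hi hin (by omega) hin
  have h₂ : SemiconjBy (yg d n i) (yt d n (i + 1)) (yt d n i) := by
    simpa [swapIdx] using yg_semiconjBy_yt (d := d) hi hin hi (by omega)
  have hinv : tRatio d n i * (yt d n (i + 1) * yt d n i ^ (d - 1)) = 1 := by
    rw [tRatio, mul_assoc, ← mul_assoc (_ ^ _), pow_sub_one_mul (by omega),
      yt_pow (by omega) hin, one_mul, yt_mul_pow_sub_one hd hi (by omega)]
  rw [ye_eq_inv_smul_geom_sum_tRatio hd hi hin]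
  exact (commute_geom_sum_of_semiconjBy (tRatio_pow hi hin) hinv
    (h₁.mul_right (h₂.pow_right _))).smul_right _

lemma isUnit_yg (hd : 1 ≤ d) {i : ℕ} (hi : 1 ≤ i) (hin : i + 1 ≤ n) : IsUnit (yg d n i) :=
  isUnit_of_sq_eq (q := Units.mk0 uu RatFunc.X_ne_zero) (isIdempotentElem_ye hd hi hin)
    (yg_commute_ye hd hi hin) (yg_sq hi hin)

end YokonumaHecke

theorem stmt14_general {R : Type*} [Ring R] {n : ℕ} {g : ℕ → R} (hn : 3 ≤ n)
    (hg : IsBraidFamily n g) (hw : IsUnit (coxeterProd g n)) :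
    ∃ w' : R, coxeterProd g n * w' = 1 ∧ w' * coxeterProd g n = 1 ∧
      (∀ i, 1 ≤ i → i + 2 ≤ n →
        parabolicSum g i = coxeterProd g n ^ (i - 1) * parabolicSum g 1 * w' ^ (i - 1)) ∧
      TwoSidedIdeal.span {x : R | ∃ i, 1 ≤ i ∧ i + 2 ≤ n ∧ x = parabolicSum g i} =
        TwoSidedIdeal.span {parabolicSum g 1} := by
  obtain ⟨w, hw⟩ := hw
  have hconj : ∀ i, 1 ≤ i → i + 2 ≤ n → parabolicSum g i =
      coxeterProd g n ^ (i - 1) * parabolicSum g 1 * (↑w⁻¹ : R) ^ (i - 1) :=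
    fun i hi hin => hg.parabolicSum_eq_conj hw hi hin
  refine ⟨↑w⁻¹, by rw [← hw, w.mul_inv], by rw [← hw, w.inv_mul], hconj, le_antisymm ?_ ?_⟩
  · rw [TwoSidedIdeal.span_le]
    rintro _ ⟨i, hi, hin, rfl⟩
    rw [hconj i hi hin]
    exact TwoSidedIdeal.mul_mem_right _ _ _ (TwoSidedIdeal.mul_mem_left _ _ _
      (TwoSidedIdeal.subset_span (Set.mem_singleton _)))
  · exact TwoSidedIdeal.span_mono (Set.singleton_subset_iff.2 ⟨1, le_rfl, hn, rfl⟩)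

theorem stmt14 (d n : ℕ) (hd : 1 ≤ d) (hn : 3 ≤ n) :
    ∃ w' : YH d n, ww d n * w' = 1 ∧ w' * ww d n = 1 ∧
      (∀ i, 1 ≤ i → i + 2 ≤ n →
        GG d n i = ww d n ^ (i - 1) * GG d n 1 * w' ^ (i - 1)) ∧
      TwoSidedIdeal.span {x : YH d n | ∃ i, 1 ≤ i ∧ i + 2 ≤ n ∧ x = GG d n i} =
        TwoSidedIdeal.span {GG d n 1} :=
  stmt14_general hn isBraidFamily_yg (isUnit_coxeterProd fun _ => isUnit_yg hd)
end

section
/- In the Yokonuma–Temperley–Lieb algebra YTL_{d,n}(u) (n≥3), the following relations hold: (1) (t_i−t_{i+2})(1+g_i) + (t_i−t_{i+1})(g_{i+1}+g_{i+1}g_i) = 0 for all 1≤i≤n−2; (2) (t_{i+2}−t_i)(1+g_{i+1}) + (t_{i+2}−t_{i+1})(g_i+g_i g_{i+1}) = 0 for all 1≤i≤n−2; (3) (t_{i+2}−t_{i+1})(t_{i+2}−t_i)(g_i+1) = 0 for all 1≤i≤n−2; (4) (t_{i−1}−t_{i+1})(t_{i−1}−t_i)(g_i+1) = 0 for all 2≤i≤n−1;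 (5) (t_i−t_{i+1})(t_{i+1}−t_{i+2})(t_i−t_{i+2}) = 0 for all 1≤i≤n−2. -/
/-- The defining relations of the Yokonuma–Temperley–Lieb algebra `YTL_{d,n}(u)`: the relations
of `Y_{d,n}(u)` together with
`g_i g_{i+1} g_i + g_i g_{i+1} + g_{i+1} g_i + g_i + g_{i+1} + 1 = 0` for `1 ≤ i ≤ n-2`. -/
inductive YTLRel (d n : ℕ) : FA → FA → Prop
  | base {a b : FA} : YRel d n a b → YTLRel d n a b
  | tl (i : ℕ) (hi : 1 ≤ i) (hin : i + 2 ≤ n) :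
      YTLRel d n
        (Gf i * Gf (i + 1) * Gf i + Gf i * Gf (i + 1) + Gf (i + 1) * Gf i +
          Gf i + Gf (i + 1) + 1) 0

/-- The Yokonuma–Temperley–Lieb algebra `YTL_{d,n}(u)`, the quotient of `Y_{d,n}(u)` by the
two-sided ideal generated by the elements
`g_i g_{i+1} g_i + g_i g_{i+1} + g_{i+1} g_i + g_i + g_{i+1} + 1`, `1 ≤ i ≤ n-2`. -/
abbrev YTL (d n : ℕ) : Type := RingQuot (YTLRel d n)

/-- The image of the generator `g_i` in `YTL_{d,n}(u)`. -/
noncomputable def zg (d n : ℕ) (i : ℕ) : YTL d n :=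
  RingQuot.mkAlgHom K (YTLRel d n) (Gf i)

/-- The image of the generator `t_j` in `YTL_{d,n}(u)`. -/
noncomputable def zt (d n : ℕ) (j : ℕ) : YTL d n :=
  RingQuot.mkAlgHom K (YTLRel d n) (Tf j)

/-! Write `a = g_i`, `b = g_{i+1}`, `x = t_i`, `y = t_{i+1}`, `z = t_{i+2}` and split the
Temperley–Lieb element into `P = aba + ab`, `Q = b + ba` and `R = 1 + a`. The way `a` and `b`
permute `x, y, z` gives `P z = x P`, `Q z = y Q` and `R z = z R`. Since `P + Q + R = 0`,
eliminating `P` yields (1), and eliminating `Q` as well yields (3). The coefficient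
`(z - y) (z - x)` of `a + 1` in (3) commutes with `y`, whereas `a x = y a`, so it also annihilates
`x - y`, which is (5). Relations (2) and (4) follow by exchanging `a` with `b` and `x` with `z`. -/

section Intertwiners

variable {A : Type*} [Ring A] {a c p q r w x y z : A}

theorem semiconjBy_of_add_eq_zero (hp : SemiconjBy p w x) (h : p + q = 0) : SemiconjBy q w x := by
  rw [eq_neg_of_add_eq_zero_right h]
  exact hp.neg_left

theorem sub_mul_add_sub_mul_eq_zero (hp : SemiconjBy p w x) (hq : SemiconjBy q w y)
    (hr : SemiconjBy r w z) (h : p + q + r = 0) : (x - z) * r + (x - y) * q = 0 := by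
  have hqr : SemiconjBy (q + r) w x := semiconjBy_of_add_eq_zero hp (by rw [← add_assoc, h])
  have eliminate : x * (q + r) = y * q + z * r := by rw [← hqr.eq, add_mul, hq.eq, hr.eq]
  linear_combination (norm := noncomm_ring) eliminate

theorem sub_mul_sub_mul_eq_zero (hp : SemiconjBy p w x) (hq : SemiconjBy q w y)
    (hr : SemiconjBy r w z) (hxy : Commute x y) (hxz : Commute x z) (h : p + q + r = 0) :
    (z - y) * (z - x) * r = 0 := by
  have hq_y : SemiconjBy ((x - y) * q) w y := SemiconjBy.mul_left (hxy.sub_left (.refl y)) hq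
  have hr_z : SemiconjBy ((x - z) * r) w z := SemiconjBy.mul_left (hxz.sub_left (.refl z)) hr
  have hr_y : SemiconjBy ((x - z) * r) w y :=
    semiconjBy_of_add_eq_zero hq_y ((add_comm _ _).trans (sub_mul_add_sub_mul_eq_zero hp hq hr h))
  have eigenvalue_eq : z * ((x - z) * r) = y * ((x - z) * r) := hr_z.eq.symm.trans hr_y.eq
  linear_combination (norm := noncomm_ring) -eigenvalue_eq

theorem mul_sub_eq_zero_of_mul_add_one_eq_zero (ha : SemiconjBy a x y) (hc : Commute c y)
    (h : c * (a + 1) = 0) : c * (x - y) = 0 :=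
  calc c * (x - y) = c * (a + 1) * x - y * (c * (a + 1)) - c * (a * x - y * a)
        - (c * y - y * c) * (a + 1) := by noncomm_ring
    _ = 0 := by simp only [h, ha.eq, hc.eq, zero_mul, mul_zero, sub_self]

end Intertwiners

/-- Elements `a`, `b`, `c` of a ring acting on commuting elements `x`, `y`, `z` as the
transpositions `(x y)`, `(y z)`, `(x z)` and satisfying the Temperley–Lieb relation. It models
`g_i`, `g_{i+1}`, `g_i g_{i+1} g_i` acting on `t_i`, `t_{i+1}`, `t_{i+2}`; keeping `c` as a separate
element makes the notion symmetric under exchanging `a` with `b` and `x` with `z`. -/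
structure IsFramedTLTriple {A : Type*} [Ring A] (a b c x y z : A) : Prop where
  a_xy : SemiconjBy a x y
  a_yx : SemiconjBy a y x
  a_z : Commute a z
  b_yz : SemiconjBy b y z
  b_zy : SemiconjBy b z y
  b_x : Commute b x
  c_xz : SemiconjBy c x z
  c_zx : SemiconjBy c z x
  xy : Commute x y
  xz : Commute x z
  yz : Commute y z
  temperleyLieb : c + a * b + b * a + a + b + 1 = 0

namespace IsFramedTLTriple

variable {A : Type*} [Ring A] {a b c x y z : A}

theorem symm (h : IsFramedTLTriple a b c x y z) : IsFramedTLTriple b a c z y x where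
  a_xy := h.b_zy
  a_yx := h.b_yz
  a_z := h.b_x
  b_yz := h.a_yx
  b_zy := h.a_xy
  b_x := h.a_z
  c_xz := h.c_zx
  c_zx := h.c_xz
  xy := h.yz.symm
  xz := h.xz.symm
  yz := h.xy.symm
  temperleyLieb := by rw [← h.temperleyLieb]; abel

theorem semiconjBy_c_add_mul (h : IsFramedTLTriple a b c x y z) : SemiconjBy (c + a * b) z x :=
  h.c_zx.add_left (h.a_yx.mul_left h.b_zy)

theorem semiconjBy_b_add_mul (h : IsFramedTLTriple a b c x y z) : SemiconjBy (b + b * a) z y :=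
  h.b_zy.add_left (h.b_zy.mul_left h.a_z)

theorem commute_one_add (h : IsFramedTLTriple a b c x y z) : Commute (1 + a) z :=
  (Commute.one_left z).add_left h.a_z

theorem add_add_eq_zero (h : IsFramedTLTriple a b c x y z) :
    (c + a * b) + (b + b * a) + (1 + a) = 0 := by
  rw [← h.temperleyLieb]
  abel

theorem sub_mul_one_add_add_eq_zero (h : IsFramedTLTriple a b c x y z) :
    (x - z) * (1 + a) + (x - y) * (b + b * a) = 0 :=
  sub_mul_add_sub_mul_eq_zero h.semiconjBy_c_add_mul h.semiconjBy_b_add_mul h.commute_one_add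
    h.add_add_eq_zero

theorem sub_mul_sub_mul_add_one_eq_zero (h : IsFramedTLTriple a b c x y z) :
    (z - y) * (z - x) * (a + 1) = 0 := by
  rw [add_comm a 1]
  exact sub_mul_sub_mul_eq_zero h.semiconjBy_c_add_mul h.semiconjBy_b_add_mul h.commute_one_add
    h.xy h.xz h.add_add_eq_zero

theorem commute_sub_sub (h : IsFramedTLTriple a b c x y z) : Commute (x - z) (x - y) :=
  (Commute.sub_left (.refl x) h.xz.symm).sub_right (h.xy.sub_left h.yz.symm)

theorem sub_mul_sub_mul_sub_eq_zero (h : IsFramedTLTriple a b c x y z) :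
    (x - y) * (y - z) * (x - z) = 0 := by
  have y_comm : Commute ((z - y) * (z - x)) y :=
    (h.yz.symm.sub_left (.refl y)).mul_left (h.yz.symm.sub_left h.xy)
  have xy_comm : Commute (x - y) ((y - z) * (x - z)) :=
    ((h.xy.sub_left (.refl y)).sub_right (h.xz.sub_left h.yz)).mul_right
      h.commute_sub_sub.symm
  calc (x - y) * (y - z) * (x - z) = (y - z) * (x - z) * (x - y) := by
        rw [mul_assoc, xy_comm.eq]
    _ = (z - y) * (z - x) * (x - y) := by
        rw [← neg_sub z y, ← neg_sub z x, neg_mul_neg]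
    _ = 0 :=
        mul_sub_eq_zero_of_mul_add_one_eq_zero h.a_xy y_comm h.sub_mul_sub_mul_add_one_eq_zero

end IsFramedTLTriple

theorem swapIdx_self (i : ℕ) : swapIdx i i = i + 1 := by
  simp [swapIdx]

theorem swapIdx_succ (i : ℕ) : swapIdx i (i + 1) = i := by
  simp [swapIdx]

theorem swapIdx_of_ne {i j : ℕ} (hi : j ≠ i) (hi' : j ≠ i + 1) : swapIdx i j = j := by
  simp [swapIdx, hi, hi']

section FramedFamily

variable {A : Type*} [Ring A] {n : ℕ} {g t : ℕ → A}

theorem isFramedTLTriple_of_relations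
    (hcomm : ∀ i j, 1 ≤ i → i ≤ n → 1 ≤ j → j ≤ n → Commute (t i) (t j))
    (hswap : ∀ i j, 1 ≤ i → i + 1 ≤ n → 1 ≤ j → j ≤ n → SemiconjBy (g i) (t (swapIdx i j)) (t j))
    (htl : ∀ i, 1 ≤ i → i + 2 ≤ n →
      g i * g (i + 1) * g i + g i * g (i + 1) + g (i + 1) * g i + g i + g (i + 1) + 1 = 0)
    (i : ℕ) (hi : 1 ≤ i) (hin : i + 2 ≤ n) :
    IsFramedTLTriple (g i) (g (i + 1)) (g i * g (i + 1) * g i) (t i) (t (i + 1)) (t (i + 2)) := by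
  have a_xy : SemiconjBy (g i) (t i) (t (i + 1)) := by
    simpa only [swapIdx_succ] using hswap i (i + 1) hi (by lia) (by lia) (by lia)
  have a_yx : SemiconjBy (g i) (t (i + 1)) (t i) := by
    simpa only [swapIdx_self] using hswap i i hi (by lia) hi (by lia)
  have a_z : SemiconjBy (g i) (t (i + 2)) (t (i + 2)) := by
    simpa only [swapIdx_of_ne (i := i) (j := i + 2) (by lia) (by lia)] using
      hswap i (i + 2) hi (by lia) (by lia) hin
  have b_yz : SemiconjBy (g (i + 1)) (t (i + 1)) (t (i + 2)) := by
    simpa only [swapIdx_succ] using hswap (i + 1) (i + 2) (by lia) hin (by lia) hin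
  have b_zy : SemiconjBy (g (i + 1)) (t (i + 2)) (t (i + 1)) := by
    simpa only [swapIdx_self] using hswap (i + 1) (i + 1) (by lia) hin (by lia) (by lia)
  have b_x : SemiconjBy (g (i + 1)) (t i) (t i) := by
    simpa only [swapIdx_of_ne (i := i + 1) (j := i) (by lia) (by lia)] using
      hswap (i + 1) i (by lia) hin hi (by lia)
  exact {
    a_xy, a_yx, a_z, b_yz, b_zy, b_x
    c_xz := (SemiconjBy.mul_left a_z b_yz).mul_left a_xy
    c_zx := (a_yx.mul_left b_zy).mul_left a_z
    xy := hcomm _ _ (by lia) (by lia) (by lia) (by lia)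
    xz := hcomm _ _ (by lia) (by lia) (by lia) (by lia)
    yz := hcomm _ _ (by lia) (by lia) (by lia) (by lia)
    temperleyLieb := htl i hi hin }

theorem stmt15_general
    (hcomm : ∀ i j, 1 ≤ i → i ≤ n → 1 ≤ j → j ≤ n → Commute (t i) (t j))
    (hswap : ∀ i j, 1 ≤ i → i + 1 ≤ n → 1 ≤ j → j ≤ n → SemiconjBy (g i) (t (swapIdx i j)) (t j))
    (htl : ∀ i, 1 ≤ i → i + 2 ≤ n →
      g i * g (i + 1) * g i + g i * g (i + 1) + g (i + 1) * g i + g i + g (i + 1) + 1 = 0) :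
    (∀ i, 1 ≤ i → i + 2 ≤ n →
      (t i - t (i + 2)) * (1 + g i) + (t i - t (i + 1)) * (g (i + 1) + g (i + 1) * g i) = 0) ∧
    (∀ i, 1 ≤ i → i + 2 ≤ n →
      (t (i + 2) - t i) * (1 + g (i + 1)) +
        (t (i + 2) - t (i + 1)) * (g i + g i * g (i + 1)) = 0) ∧
    (∀ i, 1 ≤ i → i + 2 ≤ n →
      (t (i + 2) - t (i + 1)) * (t (i + 2) - t i) * (g i + 1) = 0) ∧
    (∀ i, 2 ≤ i → i + 1 ≤ n →
      (t (i - 1) - t (i + 1)) * (t (i - 1) - t i) * (g i + 1) = 0) ∧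
    (∀ i, 1 ≤ i → i + 2 ≤ n →
      (t i - t (i + 1)) * (t (i + 1) - t (i + 2)) * (t i - t (i + 2)) = 0) := by
  have triple := isFramedTLTriple_of_relations hcomm hswap htl
  refine ⟨fun i hi hin => (triple i hi hin).sub_mul_one_add_add_eq_zero,
    fun i hi hin => (triple i hi hin).symm.sub_mul_one_add_add_eq_zero,
    fun i hi hin => (triple i hi hin).sub_mul_sub_mul_add_one_eq_zero,
    fun i hi hin => ?_,
    fun i hi hin => (triple i hi hin).sub_mul_sub_mul_sub_eq_zero⟩
  obtain ⟨j, rfl⟩ := Nat.exists_eq_add_of_le' (show 1 ≤ i by lia)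
  have h := triple j (by lia) hin
  rw [Nat.add_sub_cancel, h.commute_sub_sub.eq]
  exact h.symm.sub_mul_sub_mul_add_one_eq_zero

end FramedFamily

theorem commute_zt (d n i j : ℕ) (hi : 1 ≤ i) (hin : i ≤ n) (hj : 1 ≤ j) (hjn : j ≤ n) :
    Commute (zt d n i) (zt d n j) := by
  simpa only [zt, map_mul, commute_iff_eq] using
    RingQuot.mkAlgHom_rel K (YTLRel.base (YRel.tcomm (d := d) i j hi hin hj hjn))

theorem semiconjBy_zg_zt (d n i j : ℕ) (hi : 1 ≤ i) (hin : i + 1 ≤ n) (hj : 1 ≤ j) (hjn : j ≤ n) :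
    SemiconjBy (zg d n i) (zt d n (swapIdx i j)) (zt d n j) := by
  simpa only [zg, zt, map_mul, SemiconjBy] using
    (RingQuot.mkAlgHom_rel K (YTLRel.base (YRel.tg (d := d) i j hi hin hj hjn))).symm

theorem zg_temperleyLieb (d n i : ℕ) (hi : 1 ≤ i) (hin : i + 2 ≤ n) :
    zg d n i * zg d n (i + 1) * zg d n i + zg d n i * zg d n (i + 1) +
      zg d n (i + 1) * zg d n i + zg d n i + zg d n (i + 1) + 1 = 0 := by
  simpa only [zg, map_add, map_mul, map_one, map_zero] using
    RingQuot.mkAlgHom_rel K (YTLRel.tl (d := d) i hi hin)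

theorem stmt15 (d n : ℕ) (hd : 1 ≤ d) (hn : 3 ≤ n) :
    (∀ i, 1 ≤ i → i + 2 ≤ n →
      (zt d n i - zt d n (i + 2)) * (1 + zg d n i) +
        (zt d n i - zt d n (i + 1)) * (zg d n (i + 1) + zg d n (i + 1) * zg d n i) = 0) ∧
    (∀ i, 1 ≤ i → i + 2 ≤ n →
      (zt d n (i + 2) - zt d n i) * (1 + zg d n (i + 1)) +
        (zt d n (i + 2) - zt d n (i + 1)) * (zg d n i + zg d n i * zg d n (i + 1)) = 0) ∧
    (∀ i, 1 ≤ i → i + 2 ≤ n →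
      (zt d n (i + 2) - zt d n (i + 1)) * (zt d n (i + 2) - zt d n i) * (zg d n i + 1) = 0) ∧
    (∀ i, 2 ≤ i → i + 1 ≤ n →
      (zt d n (i - 1) - zt d n (i + 1)) * (zt d n (i - 1) - zt d n i) * (zg d n i + 1) = 0) ∧
    (∀ i, 1 ≤ i → i + 2 ≤ n →
      (zt d n i - zt d n (i + 1)) * (zt d n (i + 1) - zt d n (i + 2)) *
        (zt d n i - zt d n (i + 2)) = 0) :=
  stmt15_general (commute_zt d n) (semiconjBy_zg_zt d n) (zg_temperleyLieb d n)
end
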